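/- arXiv:math/0009238 — 3 statements merged into one kernel-verified Lean document; each statement's English description precedes it below -/
import Mathlib

section
/- Let β > 1/2 with β ∉ {3/2, 5/2, 7/2, …}. Then for every real ζ with 0 < ζ < 1: (1/(β−1/2)) · √(ζ(1+ζ)) · ₂F₁(1, 1−β; 3/2−β; −ζ) + 2^{2β−1} (Γ(β)²/Γ(2β)) · ζ^β · sec(πβ) = (1/β) · √(ζ/(1+ζ)) · ₂F₁(1, 1/2; β+1; 1/(1+ζ)). -/
open Real

/-- The Gauss hypergeometric series `₂F₁(a,b;c;x)` for real parameters,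
defined via Pochhammer symbols `(a)_r = a(a+1)⋯(a+r−1)`. -/
noncomputable def F21 (a b c x : ℝ) : ℝ :=
  ∑' r : ℕ, ((ascPochhammer ℝ r).eval a * (ascPochhammer ℝ r).eval b /
    ((ascPochhammer ℝ r).eval c * (r.factorial : ℝ))) * x ^ r

noncomputable def uu (b c : ℝ) (r : ℕ) : ℝ :=
  (ascPochhammer ℝ r).eval b / (ascPochhammer ℝ r).eval c

lemma uu_zero (b c : ℝ) : uu b c 0 = 1 := by simp [uu]

lemma uu_succ (b c : ℝ) (r : ℕ) : uu b c (r+1) = uu b c r * ((b + r) / (c + r)) := by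
  simp only [uu, ascPochhammer_succ_eval, mul_div_mul_comm]

noncomputable def SS (b c x : ℝ) : ℝ := ∑' r : ℕ, uu b c r * x ^ r

lemma F21_eq (b c x : ℝ) : F21 1 b c x = SS b c x := by
  unfold F21 SS uu
  congr 1
  ext r
  have h : (r.factorial : ℝ) ≠ 0 := by positivity
  rw [ascPochhammer_eval_one]
  rw [mul_comm (r.factorial : ℝ), mul_div_mul_right _ _ h]

lemma uu_summable_aux (b c : ℝ) {ρ : ℝ} (h0 : 0 ≤ ρ) (h1 : ρ < 1) :
    Summable (fun r : ℕ => ((r:ℝ) + 1) * |uu b c r| * ρ ^ r) := by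
  obtain ⟨q, hq, hq1⟩ := exists_between h1
  refine summable_of_ratio_norm_eventually_le (r := q) hq1 ?_
  have t1 : Filter.Tendsto (fun r : ℕ => (b + r) / (c + r)) Filter.atTop (nhds 1) := by
    simpa using tendsto_add_mul_div_add_mul_atTop_nhds b c (1:ℝ) (d := 1) one_ne_zero
  have t2 : Filter.Tendsto (fun r : ℕ => ((2:ℝ) + r) / (1 + r)) Filter.atTop (nhds 1) := by
    simpa using tendsto_add_mul_div_add_mul_atTop_nhds (2:ℝ) 1 (1:ℝ) (d := 1) one_ne_zero
  have t3 := (t2.mul t1.abs).mul_const ρ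
  simp only [abs_one, one_mul] at t3
  filter_upwards [t3.eventually (gt_mem_nhds hq)] with r hr
  rw [uu_succ, abs_mul]
  have e : ((r:ℝ) + 1) ≠ 0 := by positivity
  rw [Real.norm_of_nonneg (by positivity), Real.norm_of_nonneg (by positivity)]
  have : ((r+1:ℕ):ℝ) + 1 = ((r:ℝ)+1) * ((2 + r)/(1 + r)) := by
    rw [add_comm 1 (r:ℝ)]; push_cast; field_simp; ring
  rw [this, pow_succ]
  calc _ = ((2 + r)/(1 + r) * |(b + r) / (c + r)| * ρ) * (((r:ℝ) + 1) * |uu b c r| * ρ ^ r) := by ring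
    _ ≤ _ := by gcongr

lemma uu_summable (b c : ℝ) {x : ℝ} (h1 : |x| < 1) :
    Summable (fun r : ℕ => uu b c r * x ^ r) := by
  refine Summable.of_norm_bounded (uu_summable_aux b c (abs_nonneg x) h1) ?_
  intro r
  rw [norm_mul, norm_pow, Real.norm_eq_abs, Real.norm_eq_abs]
  have : (0:ℝ) ≤ r := by positivity
  have h2 : 0 ≤ |uu b c r| * |x| ^ r := by positivity
  nlinarith

lemma uu_summable' (b c : ℝ) {x : ℝ} (h1 : |x| < 1) :
    Summable (fun r : ℕ => r * (uu b c r * x ^ r)) := by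
  refine Summable.of_norm_bounded (uu_summable_aux b c (abs_nonneg x) h1) ?_
  intro r
  rw [norm_mul, norm_mul, norm_pow, Real.norm_eq_abs, Real.norm_eq_abs, Real.norm_eq_abs, Nat.abs_cast]
  have : (0:ℝ) ≤ r := by positivity
  have h2 : 0 ≤ |uu b c r| * |x| ^ r := by positivity
  nlinarith

lemma SS_hasDeriv (b c : ℝ) {x : ℝ} (h1 : |x| < 1) :
    HasDerivAt (SS b c) (∑' r : ℕ, uu b c r * (r * x ^ (r-1))) x := by
  obtain ⟨q, hq, hq1⟩ := exists_between h1
  have q0 : 0 < q := (abs_nonneg x).trans_lt hq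
  refine hasDerivAt_tsum_of_isPreconnected (g := fun (r : ℕ) (x : ℝ) => uu b c r * x ^ r)
    (g' := fun (r : ℕ) (x : ℝ) => uu b c r * (r * x ^ (r-1))) (t := Metric.ball (0:ℝ) q) (y₀ := 0)
    (u := fun r : ℕ => (((r:ℝ) + 1) * |uu b c r| * q ^ r) * q⁻¹) ?_ Metric.isOpen_ball
    (convex_ball (0:ℝ) q).isPreconnected ?_ ?_ ?_ ?_ ?_
  · exact (uu_summable_aux b c q0.le hq1).mul_right _
  · intro r y _
    exact (hasDerivAt_pow r y).const_mul _
  · intro r y hy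
    have hy' : |y| ≤ q := by simpa using (mem_ball_zero_iff.mp hy).le
    rw [norm_mul, norm_mul, norm_pow, Real.norm_eq_abs, Real.norm_eq_abs, Real.norm_eq_abs, Nat.abs_cast]
    rcases r with _ | r
    · simp; positivity
    · have e : q ^ (r+1) * q⁻¹ = q ^ r := by rw [pow_succ]; field_simp
      rw [mul_assoc (_ * _) (q ^ (r+1)), e]
      simp only [Nat.add_sub_cancel]
      have : |y| ^ r ≤ q ^ r := by gcongr
      calc _ = ((r+1:ℕ):ℝ) * |uu b c (r+1)| * |y| ^ r := by ring
        _ ≤ _ := by gcongr; linarith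
  · simpa using q0
  · exact uu_summable b c (by simp)
  · simpa using hq

lemma SS_zero (b c : ℝ) : SS b c 0 = 1 := by
  unfold SS
  rw [tsum_eq_single 0]
  · simp [uu_zero]
  · intro r hr; simp [hr]

/-- the first order differential equation -/
lemma SS_ode (b c : ℝ) (hc : ∀ r : ℕ, c + r ≠ 0) {x : ℝ} (h1 : |x| < 1) :
    ∃ y', HasDerivAt (SS b c) y' x ∧
      x * (1 - x) * y' + (c - 1 - b * x) * SS b c x = c - 1 := by
  refine ⟨_, SS_hasDeriv b c h1, ?_⟩
  set y' := ∑' r : ℕ, uu b c r * (r * x ^ (r-1)) with hy'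
  have e1 : x * y' = ∑' r : ℕ, r * (uu b c r * x ^ r) := by
    rw [hy', ← tsum_mul_left]
    congr 1; ext r
    rcases r with _ | r
    · simp
    · simp [pow_succ]; ring
  have s0 := uu_summable b c h1
  have s1 := uu_summable' b c h1
  have e2 : x * y' + (c - 1) * SS b c x = ∑' r : ℕ, (c - 1 + r) * (uu b c r * x ^ r) := by
    rw [e1, SS, ← tsum_mul_left, ← s1.tsum_add (s0.mul_left _)]
    congr 1; ext r; ring
  have e3 : x * (x * y' + b * SS b c x) = ∑' r : ℕ, x * ((b + r) * (uu b c r * x ^ r)) := by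
    rw [tsum_mul_left, e1, SS, ← tsum_mul_left, ← s1.tsum_add (s0.mul_left _)]
    congr 2; ext r; ring
  have s2 : Summable (fun r : ℕ => (c - 1 + r) * (uu b c r * x ^ r)) := by
    refine ((s0.mul_left (c-1)).add s1).congr ?_
    intro r; ring
  have e4 : ∑' r : ℕ, (c - 1 + r) * (uu b c r * x ^ r)
      = (c - 1) + ∑' r : ℕ, x * ((b + r) * (uu b c r * x ^ r)) := by
    rw [s2.tsum_eq_zero_add]
    congr 1
    · simp [uu_zero]
    · congr 1; ext r
      rw [uu_succ]
      have := hc r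
      push_cast
      field_simp
      ring
  rw [← e3, ← e2] at e4
  linarith

lemma uu_shift (b c : ℝ) (r : ℕ) : uu b c (r+1) = (b / c) * uu (b+1) (c+1) r := by
  induction r with
  | zero => rw [uu_succ]; simp [uu_zero]
  | succ r ih =>
    rw [uu_succ, ih, uu_succ (b+1)]
    push_cast
    rw [show b + ((r:ℝ) + 1) = b + 1 + r by ring, show c + ((r:ℝ) + 1) = c + 1 + r by ring]
    ring

lemma SS_contig (b c : ℝ) {x : ℝ} (h1 : |x| < 1) :
    SS b c x = 1 + (b / c) * x * SS (b+1) (c+1) x := by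
  rw [SS, (uu_summable b c h1).tsum_eq_zero_add, SS, ← tsum_mul_left]
  congr 1
  · simp [uu_zero]
  · congr 1; ext r
    rw [uu_shift, pow_succ]; ring

lemma uu_c (b c : ℝ) (hc : ∀ r : ℕ, c + r ≠ 0) (r : ℕ) :
    uu b (c+1) r * (c + r) = c * uu b c r := by
  induction r with
  | zero => simp [uu_zero]
  | succ r ih =>
    rw [uu_succ, uu_succ]
    have h1 := hc r
    have h2 := hc (r+1)
    push_cast at h2 ⊢
    have h3 : c + 1 + r ≠ 0 := by intro h; apply h2; linarith
    rw [show c + 1 + (r:ℝ) = c + (r + 1) by ring]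
    field_simp
    linear_combination (b + r) * ih

lemma SS_contig_c (b c : ℝ) (hc : ∀ r : ℕ, c + r ≠ 0) {x : ℝ} (h1 : |x| < 1) :
    (1 - x) * SS b c x + (c - b) / c * x * SS b (c+1) x = 1 := by
  have s0 := uu_summable b c h1
  have s1 := uu_summable b (c+1) h1
  have e : SS b c x = 1 + ∑' r : ℕ, uu b c (r+1) * x ^ (r+1) := by
    rw [SS, s0.tsum_eq_zero_add]; simp [uu_zero]
  have e2 : ∑' r : ℕ, uu b c (r+1) * x ^ (r+1) = x * SS b c x - (c - b) / c * x * SS b (c+1) x := by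
    rw [SS, SS, ← tsum_mul_left, ← tsum_mul_left, ← (s0.mul_left _).tsum_sub (s1.mul_left _)]
    congr 1; ext r
    have h := uu_c b c hc r
    have h1 := hc r
    have h0 := hc 0
    simp only [Nat.cast_zero, add_zero] at h0
    have : uu b (c+1) r = c * uu b c r / (c + r) := by rw [← h]; field_simp
    rw [uu_succ, this, pow_succ]
    field_simp
    ring
  linarith

lemma real_beta {p q : ℝ} (hp : 0 < p) (hq : 0 < q) :
    IntervalIntegrable (fun x : ℝ => x ^ (p-1) * (1-x) ^ (q-1)) MeasureTheory.volume 0 1 ∧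
    ∫ x in (0:ℝ)..1, x ^ (p-1) * (1-x) ^ (q-1) = Real.Gamma p * Real.Gamma q / Real.Gamma (p+q) := by
  have hc := Complex.betaIntegral_convergent (u := p) (v := q) (by simpa) (by simpa)
  have he : ∀ x ∈ Set.uIoc (0:ℝ) 1, (x:ℂ) ^ ((p:ℂ) - 1) * (1 - (x:ℂ)) ^ ((q:ℂ) - 1)
      = ((x ^ (p-1) * (1-x) ^ (q-1) : ℝ) : ℂ) := by
    intro x hx
    rw [Set.uIoc_of_le zero_le_one] at hx
    rw [Complex.ofReal_mul, Complex.ofReal_cpow hx.1.le, Complex.ofReal_cpow (by linarith [hx.2])]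
    push_cast; rfl
  have hc2 : IntervalIntegrable (fun x : ℝ => ((x ^ (p-1) * (1-x) ^ (q-1) : ℝ) : ℂ))
      MeasureTheory.volume 0 1 := hc.congr he
  have hc3 : IntervalIntegrable (fun x : ℝ => x ^ (p-1) * (1-x) ^ (q-1))
      MeasureTheory.volume 0 1 := by
    rw [intervalIntegrable_iff] at hc2 ⊢
    exact hc2.re
  refine ⟨hc3, ?_⟩
  have hb := ProbabilityTheory.beta_eq_betaIntegralReal p q hp hq
  rw [ProbabilityTheory.beta, Complex.betaIntegral] at hb
  rw [hb, intervalIntegral.integral_congr_ae (Filter.Eventually.of_forall he), intervalIntegral.integral_ofReal,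
    Complex.ofReal_re]

noncomputable def gg (β x : ℝ) : ℝ := (1/β) * (x ^ β * (1-x) ^ (1/2-β) * SS (1/2) (β+1) x)

lemma rpow_expand {x : ℝ} (hx : 0 < x) (p : ℝ) : x ^ (p + 1) = x ^ p * x := by
  rw [Real.rpow_add hx, Real.rpow_one]

lemma xx_deriv (β : ℝ) {x : ℝ} (h0 : 0 < x) (h1 : x < 1) :
    HasDerivAt (fun x : ℝ => x ^ β * (1-x) ^ (1/2-β))
      (x ^ (β-1) * (1-x) ^ (-1/2-β) * (β - x/2)) x := by
  have d1 := Real.hasDerivAt_rpow_const (x := x) (p := β) (Or.inl h0.ne')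
  have d2 : HasDerivAt (fun x : ℝ => 1 - x) (-1) x := by
    simpa using (hasDerivAt_id x).const_sub 1
  have d3 := d2.rpow_const (p := 1/2-β) (Or.inl (by linarith : (0:ℝ) < 1 - x).ne')
  refine (d1.mul d3).congr_deriv ?_
  have e1 : x ^ β = x ^ (β-1) * x := by rw [← rpow_expand h0]; ring_nf
  have e2 : (1-x) ^ (1/2-β) = (1-x) ^ (-1/2-β) * (1-x) := by
    rw [← rpow_expand (by linarith)]; ring_nf
  have e3 : 1/2 - β - 1 = -1/2-β := by ring
  rw [e3, e1, e2]
  ring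

lemma gg_deriv {β : ℝ} (hβ : 0 < β) {x : ℝ} (h0 : 0 < x) (h1 : x < 1) :
    HasDerivAt (gg β) (x ^ (β-1) * (1-x) ^ (-1/2-β)) x := by
  obtain ⟨y', hy, ode⟩ := SS_ode (1/2) (β+1) (x := x) (fun r => by positivity)
    (by rw [abs_of_pos h0]; exact h1)
  have := ((xx_deriv β h0 h1).mul hy).const_mul (1/β)
  refine this.congr_deriv ?_
  have e1 : x ^ β = x ^ (β-1) * x := by rw [← rpow_expand h0]; ring_nf
  have e2 : (1-x) ^ (1/2-β) = (1-x) ^ (-1/2-β) * (1-x) := by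
    rw [← rpow_expand (by linarith)]; ring_nf
  rw [e1, e2]
  rw [one_div, inv_mul_eq_div, div_eq_iff hβ.ne']
  linear_combination x ^ (β-1) * (1-x) ^ (-1/2-β) * ode

noncomputable def hh (β z : ℝ) : ℝ :=
  (1/(β-1/2)) * (z ^ (1/2-β) * (1+z) ^ (1/2:ℝ) * SS (1-β) (3/2-β) (-z))

lemma hh_deriv {β : ℝ} (hβ : 1/2 < β) (hc : ∀ r : ℕ, 3/2 - β + r ≠ 0) {z : ℝ}
    (h0 : 0 < z) (h1 : z < 1) :
    HasDerivAt (hh β) (- (z ^ (-1/2-β) * (1+z) ^ (-1/2:ℝ))) z := by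
  obtain ⟨y', hy, ode⟩ := SS_ode (1-β) (3/2-β) (x := -z) hc
    (by rw [abs_neg, abs_of_pos h0]; exact h1)
  have d1 := Real.hasDerivAt_rpow_const (x := z) (p := 1/2-β) (Or.inl h0.ne')
  have d2 : HasDerivAt (fun x : ℝ => 1 + x) 1 z := by
    simpa using (hasDerivAt_id z).const_add 1
  have d3 := d2.rpow_const (p := 1/2) (Or.inl (by linarith : (0:ℝ) < 1 + z).ne')
  have d4 := hy.scomp z (hasDerivAt_neg z)
  have := ((d1.mul d3).mul d4).const_mul (1/(β-1/2))
  refine this.congr_deriv ?_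
  have e1 : z ^ (1/2-β) = z ^ (-1/2-β) * z := by rw [← rpow_expand h0]; ring_nf
  have e2 : (1+z) ^ (1/2:ℝ) = (1+z) ^ (-1/2:ℝ) * (1+z) := by
    rw [← rpow_expand (by linarith)]; norm_num
  have e3 : 1/2 - β - 1 = -1/2-β := by ring
  have e4 : (1:ℝ)/2 - 1 = -1/2 := by ring
  have hb : β - 1/2 ≠ 0 := by linarith
  simp only [Function.comp, smul_eq_mul, Pi.mul_apply]
  rw [e3, e4, e1, e2]
  rw [one_div, inv_mul_eq_div, div_eq_iff hb]
  linear_combination z ^ (-1/2-β) * (1+z) ^ (-1/2:ℝ) * ode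

lemma base_const {β : ℝ} (hβ : 1/2 < β) (hc : ∀ r : ℕ, 3/2 - β + r ≠ 0) :
    ∃ C, ∀ z ∈ Set.Ioo (0:ℝ) 1, gg β (1/(1+z)) - hh β z = C := by
  have key : ∀ z ∈ Set.Ioo (0:ℝ) 1,
      HasDerivAt (fun z => gg β (1/(1+z)) - hh β z) 0 z := by
    intro z hz
    have hz0 := hz.1
    have p1 : 0 < 1 + z := by linarith
    have d2 : HasDerivAt (fun x : ℝ => 1 + x) 1 z := by
      simpa using (hasDerivAt_id z).const_add 1
    have d3 : HasDerivAt (fun x : ℝ => 1 / (1 + x)) (-1/(1+z)^2) z := by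
      simpa using! d2.inv p1.ne'
    have d4 := gg_deriv (β := β) (by linarith) (x := 1/(1+z)) (by positivity)
      (by rw [div_lt_one p1]; linarith)
    have d5 := (d4.comp z d3).sub (hh_deriv hβ hc hz.1 hz.2)
    refine d5.congr_deriv ?_
    have e1 : 1 - 1/(1+z) = z/(1+z) := by field_simp; ring
    rw [e1, Real.div_rpow hz0.le p1.le, one_div, Real.inv_rpow p1.le]
    have e2 : (1+z) ^ (-1/2-β) = (1+z) ^ (-1/2:ℝ) / (1+z) ^ β := by rw [← Real.rpow_sub p1]
    have e3 : (1+z) ^ (β-1) = (1+z) ^ β / (1+z) := by rw [Real.rpow_sub p1, Real.rpow_one]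
    have e4 : (1+z) ^ (-1/2:ℝ) * (1+z) ^ (-1/2:ℝ) = (1+z)⁻¹ := by
      rw [← Real.rpow_add p1, ← Real.rpow_neg_one]; norm_num
    have q1 : (1+z) ^ (-1/2:ℝ) ≠ 0 := (Real.rpow_pos_of_pos p1 _).ne'
    have q2 : (1+z) ^ β ≠ 0 := (Real.rpow_pos_of_pos p1 _).ne'
    rw [e2, e3]
    have e5 : (1+z) ^ (-1/2:ℝ) * (1+z) ^ (-1/2:ℝ) * (1+z) = 1 := by rw [e4]; field_simp
    generalize (1+z) ^ (-1/2:ℝ) = a at *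
    generalize (1+z) ^ β = b at *
    generalize z ^ (-1/2-β) = d at *
    field_simp
    linear_combination d * e5
  refine isOpen_Ioo.exists_is_const_of_deriv_eq_zero isPreconnected_Ioo
    (fun z hz => (key z hz).differentiableAt.differentiableWithinAt) (fun z hz => (key z hz).deriv)

lemma SS_cont (b c : ℝ) {x : ℝ} (h1 : |x| < 1) : ContinuousAt (SS b c) x :=
  (SS_hasDeriv b c h1).continuousAt

open Filter Topology in
lemma base_C {β : ℝ} (hβ : 1/2 < β) (hβ2 : β < 3/2) {z : ℝ} (hz : z ∈ Set.Ioo (0:ℝ) 1) :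
    gg β (1/(1+z)) - hh β z = Real.Gamma β * Real.Gamma (1/2-β) / √π := by
  have hc : ∀ r : ℕ, 3/2 - β + r ≠ 0 := fun r => by
    have : (0:ℝ) ≤ r := by positivity
    linarith
  obtain ⟨C, hC⟩ := base_const hβ hc
  rw [hC z hz]
  have hb0 : 0 < β := by linarith
  set k : ℝ → ℝ := fun x => x ^ β * (1-x) ^ (1/2-β) - (β-1/2) * gg β x with hk
  have kd : ∀ x ∈ Set.Ioo (0:ℝ) 1, HasDerivAt k (1/2 * (x ^ (β-1) * (1-x) ^ (3/2-β-1))) x := by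
    intro x hx
    have := (xx_deriv β hx.1 hx.2).sub ((gg_deriv hb0 hx.1 hx.2).const_mul (β-1/2))
    refine this.congr_deriv ?_
    have e2 : (1-x) ^ (3/2-β-1) = (1-x) ^ (-1/2-β) * (1-x) := by
      rw [← rpow_expand (by linarith [hx.2])]; ring_nf
    rw [e2]; ring
  obtain ⟨bi, bv⟩ := real_beta (p := β) (q := 3/2-β) hb0 (by linarith)
  have k0 : Tendsto k (𝓝[>] 0) (𝓝 0) := by
    have c1 : ContinuousAt k 0 := by
      have c2 : ContinuousAt (fun x : ℝ => x ^ β) 0 := Real.continuousAt_rpow_const _ _ (Or.inr hb0.le)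
      have c3 : ContinuousAt (fun x : ℝ => (1-x) ^ (1/2-β)) 0 :=
        (continuousAt_const.sub continuousAt_id).rpow_const (Or.inl (by simp))
      have c4 := SS_cont (1/2) (β+1) (x := 0) (by simp)
      exact (c2.mul c3).sub (continuousAt_const.mul (continuousAt_const.mul ((c2.mul c3).mul c4)))
    have : k 0 = 0 := by simp [hk, gg, Real.zero_rpow hb0.ne']
    have c5 := c1.tendsto
    rw [this] at c5
    exact c5.mono_left nhdsWithin_le_nhds
  set E : ℝ → ℝ := fun z => z ^ (3/2-β) * (1+z) ^ (-1/2:ℝ) *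
    (-1 + (1+z) * ((1-β)/(3/2-β)) * SS (1-β+1) (3/2-β+1) (-z)) with hE
  have kE : ∀ x ∈ Set.Ioo (1/2:ℝ) 1, k x = E ((1-x)/x) - (β-1/2) * C := by
    intro x hx
    have x0 : 0 < x := by linarith [hx.1]
    have x1 : 0 < 1 - x := by linarith [hx.2]
    have hz : (1-x)/x ∈ Set.Ioo (0:ℝ) 1 :=
      ⟨by positivity, by rw [div_lt_one x0]; linarith [hx.1]⟩
    have h := hC _ hz
    have ex : 1/(1+(1-x)/x) = x := by field_simp; ring
    rw [ex] at h
    have ex2 : 1 - x = ((1-x)/x) / (1 + (1-x)/x) := by field_simp; ring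
    have ex3 : x = 1 / (1 + (1-x)/x) := ex.symm
    set w := (1-x)/x with hw
    have w0 : 0 < w := hz.1
    have p1 : 0 < 1 + w := by linarith
    have hg : gg β x = hh β w + C := by linarith
    rw [hk]
    simp only
    rw [hg, ex2, Real.div_rpow w0.le p1.le]
    rw [ex3, one_div, Real.inv_rpow p1.le, hh, hE]
    simp only
    rw [SS_contig (1-β) (3/2-β) (x := -w) (by rw [abs_neg, abs_of_pos w0]; exact hz.2)]
    have e1 : w ^ (3/2-β) = w ^ (1/2-β) * w := by rw [← rpow_expand w0]; ring_nf
    have e2 : (1+w) ^ (1/2:ℝ) = (1+w) ^ (-1/2:ℝ) * (1+w) := by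
      rw [← rpow_expand p1]; norm_num
    have e3 : (1+w) ^ (1/2-β) = (1+w) ^ (-1/2:ℝ) * (1+w) / (1+w) ^ β := by
      rw [Real.rpow_sub p1, e2]
    have q2 : (1+w) ^ β ≠ 0 := (Real.rpow_pos_of_pos p1 _).ne'
    have q1 : (1+w) ^ (-1/2:ℝ) ≠ 0 := (Real.rpow_pos_of_pos p1 _).ne'
    have e4 : (1+w) ^ (-1/2:ℝ) * (1+w) ^ (-1/2:ℝ) * (1+w) = 1 := by
      rw [← Real.rpow_add p1, ← rpow_expand p1]; norm_num
    have e5 : ((1+w) ^ β)⁻¹ * (w ^ (1/2-β) / (1+w) ^ (1/2-β)) = w ^ (1/2-β) * (1+w) ^ (-1/2:ℝ) := by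
      rw [e3]
      clear_value w
      clear e1 e2 e3 hg ex ex2 ex3 hw h
      generalize (1+w) ^ (-1/2:ℝ) = a at *
      generalize (1+w) ^ β = b at *
      field_simp
      linear_combination -e4
    have hb : β - 1/2 ≠ 0 := by linarith
    rw [e5, e1, e2, mul_add, ← mul_assoc (β-1/2), mul_one_div_cancel hb]
    ring
  have k1 : Tendsto k (𝓝[<] 1) (𝓝 (-(β-1/2) * C)) := by
    have cE : ContinuousAt E 0 := by
      have c2 : ContinuousAt (fun x : ℝ => x ^ (3/2-β)) 0 :=
        Real.continuousAt_rpow_const _ _ (Or.inr (by linarith))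
      have c3 : ContinuousAt (fun x : ℝ => (1+x) ^ (-1/2:ℝ)) 0 :=
        (continuousAt_const.add continuousAt_id).rpow_const (Or.inl (by simp))
      have c4 : ContinuousAt (fun x : ℝ => SS (1-β+1) (3/2-β+1) (-x)) 0 := by
        refine ContinuousAt.comp (f := fun x : ℝ => -x) (SS_cont _ _ (by simp)) continuousAt_neg
      exact (c2.mul c3).mul (continuousAt_const.add
        (((continuousAt_const.add continuousAt_id).mul continuousAt_const).mul c4))
    have cw : ContinuousAt (fun x : ℝ => (1-x)/x) 1 :=
      (continuousAt_const.sub continuousAt_id).div continuousAt_id one_ne_zero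
    have c5 : ContinuousAt (fun x : ℝ => E ((1-x)/x) - (β-1/2) * C) 1 := by
      refine ContinuousAt.sub ?_ continuousAt_const
      refine ContinuousAt.comp (f := fun x : ℝ => (1-x)/x) (g := E) ?_ cw
      simpa using cE
    have c6 := c5.tendsto
    have E0 : E 0 = 0 := by
      simp only [hE]
      rw [Real.zero_rpow (by linarith)]; simp
    have e6 : E ((1-1)/1) - (β-1/2) * C = -(β-1/2) * C := by rw [sub_self, zero_div, E0]; ring
    rw [e6] at c6
    refine (c6.mono_left nhdsWithin_le_nhds).congr' ?_
    filter_upwards [Ioo_mem_nhdsLT (show (1/2:ℝ) < 1 by norm_num)] with x hx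
    exact (kE x hx).symm
  have ftc := intervalIntegral.integral_eq_sub_of_hasDerivAt_of_tendsto zero_lt_one kd
    (bi.const_mul _) k0 k1
  rw [intervalIntegral.integral_const_mul, bv] at ftc
  have g1 : Real.Gamma (3/2-β) = (1/2-β) * Real.Gamma (1/2-β) := by
    rw [← Real.Gamma_add_one (by linarith)]; ring_nf
  have g2 : Real.Gamma (β + (3/2-β)) = 1/2 * √π := by
    rw [show β + (3/2-β) = 1/2 + 1 by ring, Real.Gamma_add_one (by norm_num), Real.Gamma_one_half_eq]
  rw [g1, g2] at ftc
  generalize Real.Gamma (1/2-β) = G at *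
  have hs : √π ≠ 0 := by positivity
  have hb : β - 1/2 ≠ 0 := by linarith
  rw [eq_div_iff hs]
  apply mul_left_cancel₀ hb
  field_simp at ftc
  linear_combination (1/2) * ftc

/-- square root form -/
def PP (β z : ℝ) : Prop :=
  (1 / (β - 1/2)) * √(z * (1 + z)) * SS (1 - β) (3/2 - β) (-z) +
    Real.Gamma β * Real.Gamma (1/2-β) / √π * z ^ β =
    (1 / β) * (√(z * (1 + z)) / (1 + z)) * SS (1/2) (β + 1) (1 / (1 + z))

lemma PP_base {β : ℝ} (hβ : 1/2 < β) (hβ2 : β < 3/2) {z : ℝ} (hz : z ∈ Set.Ioo (0:ℝ) 1) :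
    PP β z := by
  have h := base_C hβ hβ2 hz
  unfold PP
  rw [← h, gg, hh]
  have z0 := hz.1
  have p1 : 0 < 1 + z := by linarith
  have e1 : 1 - 1/(1+z) = z/(1+z) := by field_simp; ring
  rw [e1, Real.div_rpow z0.le p1.le, Real.sqrt_eq_rpow, Real.mul_rpow z0.le p1.le]
  have e2 : (1/(1+z)) ^ β = ((1+z) ^ β)⁻¹ := by rw [one_div, Real.inv_rpow p1.le]
  rw [e2, Real.rpow_sub z0, Real.rpow_sub p1]
  have q1 : (1+z) ^ β ≠ 0 := (Real.rpow_pos_of_pos p1 _).ne'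
  have q2 : (1+z) ^ (1/2:ℝ) ≠ 0 := (Real.rpow_pos_of_pos p1 _).ne'
  have q3 : z ^ β ≠ 0 := (Real.rpow_pos_of_pos z0 _).ne'
  have e4 : (1+z) ^ (1/2:ℝ) * (1+z) ^ (1/2:ℝ) = (1+z) := by
    rw [← Real.rpow_add p1]; norm_num
  have e5 : z ^ (1/2:ℝ) * (1+z) ^ (1/2:ℝ) / (1+z) = z ^ (1/2:ℝ) / (1+z) ^ (1/2:ℝ) := by
    rw [div_eq_div_iff p1.ne' q2]; linear_combination z ^ (1/2:ℝ) * e4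
  rw [e5, sub_mul]
  have e6 : ∀ S : ℝ, 1 / β * (((1 + z) ^ β)⁻¹ * (z ^ (1/2:ℝ) / z ^ β / ((1 + z) ^ (1/2:ℝ) / (1 + z) ^ β)) * S) * z ^ β
      = 1 / β * (z ^ (1/2:ℝ) / (1+z) ^ (1/2:ℝ)) * S := by
    intro S; field_simp
  have e7 : ∀ S : ℝ, 1 / (β-1/2) * (z ^ (1/2:ℝ) / z ^ β * (1 + z) ^ (1/2:ℝ) * S) * z ^ β
      = 1 / (β-1/2) * (z ^ (1/2:ℝ) * (1+z) ^ (1/2:ℝ)) * S := by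
    intro S
    generalize 1 / (β-1/2) = t
    field_simp
  rw [e6, e7]
  ring

lemma PP_step {β : ℝ} (hβ : 1/2 < β) {z : ℝ} (hz : z ∈ Set.Ioo (0:ℝ) 1)
    (h : PP β z) : PP (β+1) z := by
  unfold PP at h ⊢
  have z0 := hz.1
  have p1 : 0 < 1 + z := by linarith
  have hb : β - 1/2 ≠ 0 := by linarith
  have hb' : 1/2 - β ≠ 0 := by linarith
  have hb2 : β + 1/2 ≠ 0 := by linarith
  have hb3 : β + 1 ≠ 0 := by linarith
  have hb4 : β ≠ 0 := by linarith
  have a1 := SS_contig (-β) (1/2-β) (x := -z) (by rw [abs_neg, abs_of_pos z0]; exact hz.2)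
  have a2 := SS_contig_c (1/2) (β+1) (fun r => by positivity) (x := 1/(1+z))
    (by rw [abs_of_pos (by positivity), div_lt_one p1]; linarith)
  have g1 : Real.Gamma (1/2-β) = (-(β+1/2)) * Real.Gamma (1/2-(β+1)) := by
    have h2 : 1/2-(β+1) ≠ 0 := by linarith
    have := Real.Gamma_add_one h2
    rw [show 1/2-(β+1)+1 = 1/2-β by ring] at this
    rw [this]; ring
  rw [Real.Gamma_add_one hb4, rpow_expand z0]
  rw [show 1 - (β+1) = -β by ring, show 3/2-(β+1) = 1/2-β by ring, a1]
  rw [show -β+1 = 1-β by ring, show 1/2-β+1 = 3/2-β by ring, show β+1-1/2 = β+1/2 by ring]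
  rw [g1] at h
  have hs : √π ≠ 0 := by positivity
  generalize SS (1-β) (3/2-β) (-z) = A at *
  generalize SS (1/2) (β+1) (1/(1+z)) = B at *
  generalize SS (1/2) (β+1+1) (1/(1+z)) = B' at *
  generalize √(z*(1+z)) = s at *
  generalize Real.Gamma (1/2-(β+1)) = G at *
  generalize Real.Gamma β = G2 at *
  generalize z ^ β = Z at *
  generalize √π = P at *
  have hB' : 1/(β+1) * (s/(1+z)) * B' = s/(β+1/2) * (1 - z/(1+z)*B) := by
    have : 1/(1+z) * ((β+1/2)/(β+1)) * B' = 1 - z/(1+z)*B := by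
      have e9 : 1 - 1/(1+z) = z/(1+z) := by field_simp; ring
      rw [e9] at a2
      linear_combination a2
    rw [← this]; field_simp
  have hB : z/(1+z)*B*s = β * z * (1/β * (s/(1+z)) * B) := by field_simp
  rw [hB', mul_sub, div_mul_eq_mul_div s _ (z/(1+z)*B), show s * (z/(1+z)*B) = z/(1+z)*B*s by ring,
    hB, ← h]
  have e8 : -β/(1/2-β) = β * (1/(β-1/2)) := by
    rw [show 1/2-β = -(β-1/2) by ring, neg_div_neg_eq]; ring
  rw [e8]
  generalize 1/(β-1/2) = t
  field_simp
  ring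

lemma PP_all (n : ℕ) : ∀ β : ℝ, 1/2 < β → (∀ n : ℕ, 1 ≤ n → β ≠ (n : ℝ) + 1/2) → β < n + 3/2 →
    ∀ z ∈ Set.Ioo (0:ℝ) 1, PP β z := by
  induction n with
  | zero =>
    intro β h1 _ h2 z hz
    exact PP_base h1 (by simpa using h2) hz
  | succ n ih =>
    intro β h1 h3 h2 z hz
    rcases lt_trichotomy β (3/2) with h | h | h
    · exact PP_base h1 h hz
    · exact absurd (by rw [h]; norm_num) (h3 1 le_rfl)
    · have := PP_step (β := β - 1) (by linarith) hz (ih (β-1) (by linarith)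
        (fun m hm he => h3 (m+1) (by omega) (by push_cast; linarith))
        (by push_cast at h2; linarith) z hz)
      simpa using this

lemma const_eq {β : ℝ} (hβ : 1/2 < β) (hβ' : ∀ n : ℕ, 1 ≤ n → β ≠ (n : ℝ) + 1/2) :
    (2:ℝ) ^ (2 * β - 1) * (Real.Gamma β ^ 2 / Real.Gamma (2 * β)) * (1 / Real.cos (π * β)) =
    Real.Gamma β * Real.Gamma (1/2-β) / √π := by
  have h1 := Real.Gamma_mul_Gamma_add_half β
  have h2 := Real.Gamma_mul_Gamma_one_sub (1/2+β)
  rw [show 1 - (1/2+β) = 1/2-β by ring, show π * (1/2+β) = π * β + π/2 by ring,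
    Real.sin_add_pi_div_two, add_comm (1/2) β] at h2
  have g1 : Real.Gamma (β+1/2) ≠ 0 := (Real.Gamma_pos_of_pos (by linarith)).ne'
  have g2 : Real.Gamma β ≠ 0 := (Real.Gamma_pos_of_pos (by linarith)).ne'
  have g3 : Real.Gamma (2*β) ≠ 0 := (Real.Gamma_pos_of_pos (by linarith)).ne'
  have g4 : Real.Gamma (1/2-β) ≠ 0 := by
    refine Real.Gamma_ne_zero (fun m hm => ?_)
    rcases Nat.eq_zero_or_pos m with h | h
    · subst h; simp at hm; linarith
    · exact hβ' m h (by linarith)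
  have hs : √π ≠ 0 := by positivity
  have hpi : π = √π * √π := (Real.mul_self_sqrt Real.pi_pos.le).symm
  have hcos : Real.cos (π * β) ≠ 0 := by
    intro h; rw [h, div_zero] at h2; exact mul_ne_zero g1 g4 h2
  have h3 : (2:ℝ) ^ (1-2*β) = ((2:ℝ) ^ (2*β-1))⁻¹ := by
    rw [← Real.rpow_neg (by norm_num)]; ring_nf
  have h4 : (2:ℝ) ^ (2*β-1) ≠ 0 := (Real.rpow_pos_of_pos (by norm_num) _).ne'
  rw [h3] at h1
  have h5 : Real.Gamma (2*β) = Real.Gamma β * Real.Gamma (β+1/2) * (2:ℝ) ^ (2*β-1) / √π := by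
    rw [h1]; field_simp
  have h6 : Real.Gamma (1/2-β) = √π * √π / Real.cos (π*β) / Real.Gamma (β+1/2) := by
    rw [← hpi, ← h2]; field_simp
  rw [h5, h6]
  generalize Real.cos (π*β) = c at *
  generalize √π = P at *
  field_simp

/-- For `β > 1/2` which is not of the form `n + 1/2` with
`n ≥ 1`, and `0 < ζ < 1`, the two representations of `f` agree:
`(1/(β−1/2))·√(ζ(1+ζ))·₂F₁(1,1−β;3/2−β;−ζ) + 2^{2β−1}(Γ(β)²/Γ(2β))·ζ^β·sec(πβ)
  = (1/β)·√(ζ/(1+ζ))·₂F₁(1,1/2;β+1;1/(1+ζ))`. -/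
theorem hypergeom_identity_nonhalfinteger
    (β : ℝ) (hβ : 1/2 < β) (hβ' : ∀ n : ℕ, 1 ≤ n → β ≠ (n : ℝ) + 1/2)
    (ζ : ℝ) (h0 : 0 < ζ) (h1 : ζ < 1) :
    (1 / (β - 1/2)) * Real.sqrt (ζ * (1 + ζ)) * F21 1 (1 - β) (3/2 - β) (-ζ) +
      (2:ℝ) ^ (2 * β - 1) * (Real.Gamma β ^ 2 / Real.Gamma (2 * β)) * ζ ^ β *
        (1 / Real.cos (π * β)) =
    (1 / β) * Real.sqrt (ζ / (1 + ζ)) * F21 1 (1/2) (β + 1) (1 / (1 + ζ)) := by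
  obtain ⟨n, hn⟩ := exists_nat_gt β
  have h := PP_all n β hβ hβ' (by linarith) ζ ⟨h0, h1⟩
  unfold PP at h
  have p1 : 0 < 1 + ζ := by linarith
  have e : Real.sqrt (ζ / (1 + ζ)) = Real.sqrt (ζ * (1 + ζ)) / (1 + ζ) := by
    rw [show ζ / (1 + ζ) = ζ * (1 + ζ) / (1 + ζ) ^ 2 by field_simp, Real.sqrt_div (by positivity),
      Real.sqrt_sq p1.le]
  rw [F21_eq, F21_eq, e, ← h, ← const_eq hβ hβ']
  ring
end

section
/- Let (P_n) be the orthonormal polynomials for the Laguerre weight exp(−x) on [0,∞) as in the context. Then for every fixed real t < 0, lim_{N→∞} P_N(t) / [ (−1)^N (2√π)^{−1} (−tN)^{−1/4} exp(2√(−tN) + t/2) ] = 1. -/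
open MeasureTheory Real Filter Topology Polynomial

lemma lag_intble (k : ℕ) : IntegrableOn (fun x : ℝ => x ^ k * Real.exp (-x)) (Set.Ioi 0) := by
  have h := Real.GammaIntegral_convergent (s := (k:ℝ) + 1) (by positivity)
  refine h.congr_fun (fun x _ => ?_) measurableSet_Ioi
  simp [mul_comm]

lemma lag_moment (k : ℕ) : ∫ x in Set.Ioi (0:ℝ), x ^ k * Real.exp (-x) = (k.factorial : ℝ) := by
  rw [← Real.Gamma_nat_eq_factorial, Real.Gamma_eq_integral (by positivity)]
  refine setIntegral_congr_fun measurableSet_Ioi (fun x _ => ?_)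
  simp [mul_comm]

lemma lag_intble_poly (p : ℝ[X]) :
    IntegrableOn (fun x : ℝ => p.eval x * Real.exp (-x)) (Set.Ioi 0) := by
  induction p using Polynomial.induction_on' with
  | add p q hp hq => 
    simp only [eval_add, add_mul]
    exact Integrable.add hp hq
  | monomial n a =>
    have := (lag_intble n).const_mul a
    simp only [eval_monomial, mul_assoc]
    exact this

noncomputable def lagE : ℝ[X] →ₗ[ℝ] ℝ where
  toFun p := ∫ x in Set.Ioi (0:ℝ), p.eval x * Real.exp (-x)
  map_add' p q := by
    simp only [eval_add, add_mul]
    exact integral_add (lag_intble_poly p) (lag_intble_poly q)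
  map_smul' c p := by
    simp [mul_assoc, integral_const_mul]

lemma lagE_X_pow (k : ℕ) : lagE (X ^ k) = (k.factorial : ℝ) := by
  simpa [lagE] using lag_moment k

noncomputable def lagQ (n : ℕ) : ℝ[X] :=
  ∑ k ∈ Finset.range (n + 1), C ((-1 : ℝ) ^ k * (n.choose k) / k.factorial) * X ^ k

lemma lagQ_mom (n m : ℕ) : lagE (X ^ m * lagQ n) =
    (-1) ^ n * (fwdDiff (1:ℝ))^[n] (ascPochhammer ℝ m).eval 1 := by
  rw [fwdDiff_iter_eq_sum_shift, lagQ, Finset.mul_sum, map_sum, Finset.mul_sum]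
  refine Finset.sum_congr rfl fun k hk => ?_
  have hk' : k ≤ n := by simpa [Nat.lt_succ_iff] using hk
  have h1 : (X:ℝ[X]) ^ m * (C ((-1 : ℝ) ^ k * (n.choose k) / k.factorial) * X ^ k) =
    ((-1 : ℝ) ^ k * (n.choose k) / k.factorial) • X ^ (k + m) := by
    rw [smul_eq_C_mul]; ring
  have h2 := factorial_mul_ascPochhammer ℝ k m
  rw [h1, map_smul, lagE_X_pow, ← h2]
  have h3 : (k.factorial : ℝ) ≠ 0 := by positivity
  have h4 : (-1:ℝ) ^ n * (-1) ^ (n - k) = (-1) ^ k := by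
    obtain ⟨j, rfl⟩ := Nat.exists_eq_add_of_le hk'
    rw [Nat.add_sub_cancel_left, pow_add, mul_assoc, ← mul_pow]; simp
  simp only [smul_eq_mul, zsmul_eq_mul, nsmul_eq_mul, mul_one]
  push_cast
  rw [← h4]
  field_simp
  rw [add_comm (1:ℝ)]

lemma lagQ_orth (n m : ℕ) (h : m < n) : lagE (X ^ m * lagQ n) = 0 := by
  rw [lagQ_mom, Polynomial.fwdDiff_iter_eq_zero_of_degree_lt (by simpa using h)]; simp

lemma lagQ_top (n : ℕ) : lagE (X ^ n * lagQ n) = (-1) ^ n * n.factorial := by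
  rw [lagQ_mom]
  have := Polynomial.fwdDiff_iter_degree_eq_factorial (ascPochhammer ℝ n)
  rw [ascPochhammer_natDegree, (monic_ascPochhammer ℝ n).leadingCoeff] at this
  rw [this]; simp

lemma lagQ_coeff (n : ℕ) : (lagQ n).coeff n = (-1) ^ n / n.factorial := by
  simp [lagQ, coeff_X_pow]

lemma lagQ_natDegree (n : ℕ) : (lagQ n).natDegree ≤ n := by
  refine natDegree_sum_le_of_forall_le _ _ fun k hk => ?_
  refine (natDegree_C_mul_X_pow_le _ _).trans ?_
  simpa [Nat.lt_succ_iff] using hk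

/-- orthogonality to all lower-degree polynomials from orthogonality to a family -/
lemma lag_lower (P : ℕ → ℝ[X]) (hdeg : ∀ n, (P n).natDegree = n) (hne : ∀ n, P n ≠ 0)
    (L : ℝ[X] →ₗ[ℝ] ℝ) (n : ℕ) (hL : ∀ m < n, L (P m) = 0) (R : ℝ[X]) (hR : R.degree < n) :
    L R = 0 := by
  induction n generalizing R with
  | zero =>
    have : R = 0 := by simpa using hR
    simp [this]
  | succ n ih =>
    have hl : (P n).coeff n ≠ 0 := by
      have := leadingCoeff_ne_zero.mpr (hne n)
      rwa [leadingCoeff, hdeg] at this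
    have := ih (fun m hm => hL m (by omega)) (R - C (R.coeff n / (P n).coeff n) * P n) ?_
    · rw [map_sub, ← smul_eq_C_mul, map_smul, hL n (by omega)] at this
      simpa using this
    · rw [degree_lt_iff_coeff_zero] at hR ⊢
      intro m hm
      rcases hm.eq_or_lt with hm | hm
      · rw [← hm]; simp [hl]
      · rw [coeff_sub, hR m hm, coeff_C_mul, coeff_eq_zero_of_natDegree_lt (p := P n) (n := m) (by rw [hdeg]; exact hm)]
        simp

lemma lag_unique
    (P : ℕ → Polynomial ℝ)
    (hdeg : ∀ n, (P n).natDegree = n)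
    (hlead : ∀ n, 0 < (P n).leadingCoeff)
    (horth : ∀ m n, (∫ x in Set.Ioi (0:ℝ),
      (P m).eval x * (P n).eval x * Real.exp (-x)) = if m = n then 1 else 0) (n : ℕ) :
    P n = C ((-1) ^ n) * lagQ n := by
  have hne : ∀ n, P n ≠ 0 := fun n h => by simpa [h] using hlead n
  have ho : ∀ m n, lagE (P m * P n) = if m = n then 1 else 0 := by
    intro m n; simpa [lagE] using horth m n
  have hlc : 0 < (P n).coeff n := by have := hlead n; rwa [leadingCoeff, hdeg] at this
  -- linear functionals
  have hP : ∀ n : ℕ, ∀ R : ℝ[X], R.degree < (n : WithBot ℕ) → lagE (R * P n) = 0 := by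
    intro n R hR
    have := lag_lower P hdeg hne (lagE ∘ₗ LinearMap.mulRight ℝ (P n)) n
      (fun m hm => by simp [ho, hm.ne]) R hR
    simpa using this
  have hQ : ∀ R : ℝ[X], R.degree < n → lagE (R * lagQ n) = 0 := by
    intro R hR
    have := lag_lower (fun k => X ^ k) (by simp) (by simp) (lagE ∘ₗ LinearMap.mulRight ℝ (lagQ n)) n
      (fun m hm => by simp [lagQ_orth n m hm]) R hR
    simpa using this
  have hfac : (n.factorial : ℝ) ≠ 0 := by positivity
  have h11 : ((-1:ℝ) ^ n) * (-1) ^ n = 1 := by rw [← mul_pow]; simp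
  set c : ℝ := (-1) ^ n * n.factorial * (P n).coeff n with hc
  have hRdeg : (P n - C c * lagQ n).degree < n := by
    rw [degree_lt_iff_coeff_zero]
    intro m hm
    rcases hm.eq_or_lt with rfl | hm
    · rw [coeff_sub, coeff_C_mul, lagQ_coeff, hc]
      field_simp
      linear_combination (-(P n).coeff n) * h11
    · rw [coeff_sub, coeff_C_mul, coeff_eq_zero_of_natDegree_lt (p := P n) (n := m) (by rw [hdeg]; exact hm),
        coeff_eq_zero_of_natDegree_lt ((lagQ_natDegree n).trans_lt hm)]
      simp
  have hR0 : P n - C c * lagQ n = 0 := by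
    by_contra hRne
    set R := P n - C c * lagQ n with hR
    set d := R.natDegree with hd
    have hdn : d < n := by
      rw [degree_eq_natDegree hRne] at hRdeg; exact_mod_cast hRdeg
    have hPd : (P d).degree < n := by
      rw [degree_eq_natDegree (hne d), hdeg]; exact_mod_cast hdn
    have hl : (P d).coeff d ≠ 0 := by
      have := leadingCoeff_ne_zero.mpr (hne d)
      rwa [leadingCoeff, hdeg] at this
    have e1 : lagE (R * P d) = 0 := by
      have : R * P d = P d * P n - c • (P d * lagQ n) := by rw [hR, smul_eq_C_mul]; ring
      rw [this, map_sub, map_smul, hP n _ hPd, hQ _ hPd]; simp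
    have e2 : lagE ((R - C (R.coeff d / (P d).coeff d) * P d) * P d) = 0 := by
      apply hP
      rw [degree_lt_iff_coeff_zero]
      intro m hm
      rcases hm.eq_or_lt with hm | hm
      · rw [← hm]; simp [hl]
      · rw [coeff_sub, coeff_C_mul, coeff_eq_zero_of_natDegree_lt (p := P d) (n := m) (by rw [hdeg]; exact hm),
          coeff_eq_zero_of_natDegree_lt hm]
        simp
    rw [sub_mul, map_sub, e1, mul_assoc, ← smul_eq_C_mul, map_smul, ho] at e2
    have : R.coeff d / (P d).coeff d ≠ 0 := div_ne_zero
      (by rw [hd]; exact leadingCoeff_ne_zero.mpr hRne) hl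
    simp at e2
    rcases e2 with h | h
    · rw [h] at this; simp at this
    · exact hl h
  have hPn : P n = C c * lagQ n := sub_eq_zero.mp hR0
  -- normalization
  have e3 : lagE (P n * lagQ n) = c⁻¹ * 1 := by
    have hc0 : c ≠ 0 := by rw [hc]; positivity
    have := ho n n
    nth_rw 2 [hPn] at this
    rw [mul_left_comm, ← smul_eq_C_mul, map_smul] at this
    simp at this
    field_simp
    linarith
  have e4 : lagE ((P n - C ((P n).coeff n) * X ^ n) * lagQ n) = 0 := by
    apply hQ
    rw [degree_lt_iff_coeff_zero]
    intro m hm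
    rcases hm.eq_or_lt with rfl | hm
    · simp
    · rw [coeff_sub, coeff_eq_zero_of_natDegree_lt (by rw [hdeg]; exact hm)]
      simp [coeff_X_pow, hm.ne']
  rw [sub_mul, map_sub, e3, mul_assoc, ← smul_eq_C_mul, map_smul, lagQ_top] at e4
  have hc0 : c ≠ 0 := by rw [hc]; positivity
  have hcc : c * c = 1 := by
    have : c⁻¹ = c := by rw [hc] at e4 ⊢; simp only [smul_eq_mul] at e4; linarith
    rw [← mul_inv_cancel₀ hc0, this]
  have hpos : 0 < (-1) ^ n * c := by
    rw [hc, ← mul_assoc, ← mul_assoc, h11]; positivity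
  have : (-1) ^ n * c = 1 := by
    have : ((-1) ^ n * c) * ((-1) ^ n * c) = 1 := by linear_combination hcc * (-1)^n * (-1)^n + h11
    nlinarith
  have : c = (-1) ^ n := by linear_combination (-1)^n * this - c * h11
  rw [hPn, this]

lemma lag_eval
    (P : ℕ → Polynomial ℝ)
    (hdeg : ∀ n, (P n).natDegree = n)
    (hlead : ∀ n, 0 < (P n).leadingCoeff)
    (horth : ∀ m n, (∫ x in Set.Ioi (0:ℝ),
      (P m).eval x * (P n).eval x * Real.exp (-x)) = if m = n then 1 else 0) (n : ℕ) (s : ℝ) :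
    (P n).eval (-s) = (-1) ^ n * ∑ k ∈ Finset.range (n + 1), (n.choose k : ℝ) * s ^ k / k.factorial := by
  rw [lag_unique P hdeg hlead horth, lagQ, eval_mul, eval_C, eval_finsetSum]
  congr 1
  refine Finset.sum_congr rfl fun k _ => ?_
  rw [eval_mul, eval_C, eval_pow, eval_X, neg_pow]
  have : ((-1:ℝ) ^ k) * (-1) ^ k = 1 := by rw [← mul_pow]; simp
  linear_combination ((n.choose k : ℝ) * s ^ k / k.factorial) * this

lemma lag_rep (s R : ℝ) (hR : 0 < R) (n : ℕ) :
    ∫ θ in (-π)..π, (1 + (s / R : ℝ) * Complex.exp (-(θ * Complex.I))) ^ n *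
      Complex.exp (R * Complex.exp (θ * Complex.I)) =
    2 * π * ((∑ k ∈ Finset.range (n + 1), (n.choose k : ℝ) * s ^ k / k.factorial : ℝ) : ℂ) := by
  have key : ∀ k : ℕ, ∫ θ in (-π)..π, (Complex.exp (-(θ * Complex.I))) ^ k *
      Complex.exp (R * Complex.exp (θ * Complex.I)) = 2 * π * R ^ k / k.factorial := by
    intro k
    have h1 := DifferentiableOn.circleIntegral_one_div_sub_center_pow_smul (c := 0) hR k
      (f := Complex.exp) Complex.differentiable_exp.differentiableOn
    rw [circleIntegral] at h1
    have hRc : (R:ℂ) ≠ 0 := by exact_mod_cast hR.ne'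
    have hit : iteratedDeriv k Complex.exp 0 = 1 := by
      rw [iteratedDeriv_eq_iterate, Complex.iter_deriv_exp]; simp
    have h2 : ∀ θ : ℝ, deriv (circleMap 0 R) θ • (1 / (circleMap 0 R θ - 0) ^ (k + 1)) •
        Complex.exp (circleMap 0 R θ) = (Complex.I / R ^ k) * ((Complex.exp (-(θ * Complex.I))) ^ k *
      Complex.exp (R * Complex.exp (θ * Complex.I))) := by
      intro θ
      have := Complex.exp_ne_zero (θ * Complex.I)
      simp only [deriv_circleMap, circleMap, smul_eq_mul, zero_add, sub_zero, Complex.exp_neg, inv_pow]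
      rw [mul_pow]
      field_simp
      ring
    simp_rw [h2] at h1
    rw [intervalIntegral.integral_const_mul, hit] at h1
    have hper : Function.Periodic (fun θ : ℝ => (Complex.exp (-(θ * Complex.I))) ^ k *
      Complex.exp (R * Complex.exp (θ * Complex.I))) (2 * π) := by
      intro θ
      have : Complex.exp (((θ + 2 * π : ℝ) : ℂ) * Complex.I) = Complex.exp (θ * Complex.I) := by
        push_cast
        rw [add_mul]; exact Complex.exp_periodic _
      simp only [Complex.exp_neg, this]
    have h3 := hper.intervalIntegral_add_eq (-π) 0
    rw [show -π + 2 * π = π by ring, zero_add] at h3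
    rw [h3]
    simp only [smul_eq_mul, mul_one] at h1
    have hI := Complex.I_ne_zero
    have hf : (k.factorial : ℂ) ≠ 0 := by exact_mod_cast k.factorial_ne_zero
    field_simp at h1 ⊢
    linear_combination h1
  have hexp : ∀ θ : ℝ, (1 + (s / R : ℝ) * Complex.exp (-(θ * Complex.I))) ^ n *
      Complex.exp (R * Complex.exp (θ * Complex.I)) =
      ∑ k ∈ Finset.range (n + 1), ((n.choose k : ℂ) * (s / R) ^ k) *
        ((Complex.exp (-(θ * Complex.I))) ^ k * Complex.exp (R * Complex.exp (θ * Complex.I))) := by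
    intro θ
    rw [add_comm, add_pow, Finset.sum_mul]
    refine Finset.sum_congr rfl fun k _ => ?_
    rw [mul_pow]; push_cast; simp; ring
  simp_rw [hexp]
  rw [intervalIntegral.integral_finsetSum]
  · simp_rw [intervalIntegral.integral_const_mul, key]
    push_cast
    rw [Finset.mul_sum]
    refine Finset.sum_congr rfl fun k _ => ?_
    have hRc : (R:ℂ) ≠ 0 := by exact_mod_cast hR.ne'
    rw [div_pow]
    field_simp
  · intro k _
    apply Continuous.intervalIntegrable
    fun_prop

lemma lag_bound (s M : ℝ) (hM : 0 < M) (hs : 0 < s) (n : ℕ) (hn : M ^ 2 = s * n) (θ : ℝ)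
    (hθ : |θ| ≤ π) :
    ‖Complex.exp (-2 * M) * ((1 + (s / M : ℝ) * Complex.exp (-(θ * Complex.I))) ^ n *
      Complex.exp (M * Complex.exp (θ * Complex.I)))‖ ≤
      Real.exp (s / 2) * Real.exp (-(4 / π ^ 2) * (M * θ ^ 2)) := by
  have h1 : ‖Complex.exp (-2 * M)‖ = Real.exp (-2 * M) := by
    rw [Complex.norm_exp]; simp
  have h2 : ‖Complex.exp (M * Complex.exp (θ * Complex.I))‖ = Real.exp (M * Real.cos θ) := by
    rw [Complex.norm_exp, Complex.re_ofReal_mul, Complex.exp_ofReal_mul_I_re]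
  have h3 : ‖(1 + (s / M : ℝ) * Complex.exp (-(θ * Complex.I)))‖ ≤
      Real.exp ((2 * (s / M) * Real.cos θ + (s / M) ^ 2) / 2) := by
    refine abs_le_of_sq_le_sq' ?_ (Real.exp_pos _).le |>.2
    rw [← Complex.normSq_eq_norm_sq, ← Real.exp_nat_mul]
    have : Complex.normSq (1 + (s / M : ℝ) * Complex.exp (-(θ * Complex.I))) =
      1 + (2 * (s / M) * Real.cos θ + (s / M) ^ 2) := by
      rw [Complex.normSq_apply, ← neg_mul, ← Complex.ofReal_neg]
      simp only [Complex.add_re, Complex.one_re, Complex.re_ofReal_mul, Complex.exp_ofReal_mul_I_re,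
        Complex.add_im, Complex.one_im, Complex.im_ofReal_mul, Complex.exp_ofReal_mul_I_im,
        Real.cos_neg, Real.sin_neg]
      linear_combination (s / M) ^ 2 * Real.sin_sq_add_cos_sq θ
    rw [this]
    refine (add_comm _ _).trans_le ((Real.add_one_le_exp _).trans (le_of_eq ?_))
    congr 1; push_cast; ring
  have h4 := pow_le_pow_left₀ (norm_nonneg _) h3 n
  rw [← Real.exp_nat_mul] at h4
  rw [norm_mul, norm_mul, norm_pow, h1, h2]
  calc _ ≤ Real.exp (-2 * M) * (Real.exp (n * ((2 * (s / M) * Real.cos θ + (s / M) ^ 2) / 2)) *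
      Real.exp (M * Real.cos θ)) := by gcongr
    _ = Real.exp (s / 2 + 2 * M * (Real.cos θ - 1)) := by
      rw [← Real.exp_add, ← Real.exp_add]
      congr 1
      have hn' : (n : ℝ) = M ^ 2 / s := by rw [hn]; field_simp
      rw [hn']; field_simp; ring
    _ ≤ Real.exp (s / 2 + -(4 / π ^ 2) * (M * θ ^ 2)) := by
      have := Real.cos_le_one_sub_mul_cos_sq hθ
      have h5 : 2 * M * (Real.cos θ - 1) ≤ -(4 / π ^ 2) * (M * θ ^ 2) := by
        calc 2 * M * (Real.cos θ - 1) ≤ 2 * M * (- (2 / π ^ 2 * θ ^ 2)) :=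
              mul_le_mul_of_nonneg_left (by linarith) (by positivity)
          _ = _ := by ring
      exact Real.exp_le_exp.mpr (by linarith)
    _ = _ := Real.exp_add _ _

/-- If `n w_n² → s`, then `(1+w)^n e^{-nw} → e^{-s/2}`. -/
lemma lag_lim1 (w : ℕ → ℂ) (s : ℂ) (hw0 : Tendsto w atTop (𝓝 0))
    (hw : Tendsto (fun n : ℕ => (n : ℂ) * w n ^ 2) atTop (𝓝 s)) :
    Tendsto (fun n : ℕ => (1 + w n) ^ n * Complex.exp (-(n * w n))) atTop
      (𝓝 (Complex.exp (-s / 2))) := by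
  have hnw : Tendsto (fun n => ‖w n‖) atTop (𝓝 0) := by simpa using hw0.norm
  have hev : ∀ᶠ n in atTop, ‖w n‖ < 1 / 2 := hnw.eventually_lt_const (by norm_num)
  have herr : Tendsto (fun n : ℕ => (n : ℂ) * (Complex.log (1 + w n) - (w n - w n ^ 2 / 2)))
      atTop (𝓝 0) := by
    have hb : Tendsto (fun n : ℕ => ‖(n : ℂ) * w n ^ 2‖ * ‖w n‖) atTop (𝓝 0) := by
      simpa using hw.norm.mul hnw
    refine squeeze_zero_norm' ?_ hb
    filter_upwards [hev] with n hn
    have h := Complex.norm_log_sub_logTaylor_le 2 (z := w n) (by linarith)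
    have ht : Complex.logTaylor (2 + 1) (w n) = w n - w n ^ 2 / 2 := by
      simp [Complex.logTaylor, Finset.sum_range_succ]; ring
    rw [ht] at h
    have h' : ‖Complex.log (1 + w n) - (w n - w n ^ 2 / 2)‖ ≤ ‖w n‖ ^ 3 := by
      refine h.trans ?_
      have : (1 - ‖w n‖)⁻¹ ≤ 2 := by
        rw [inv_le_comm₀ (by linarith) (by norm_num)]; linarith
      have h0 : 0 ≤ ‖w n‖ ^ 3 := by positivity
      push_cast
      norm_num
      nlinarith
    rw [norm_mul, norm_mul, norm_pow]
    calc _ ≤ ‖(n:ℂ)‖ * ‖w n‖ ^ 3 := by gcongr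
      _ = _ := by ring
  have hsum : Tendsto (fun n : ℕ => (n : ℂ) * (Complex.log (1 + w n) - (w n - w n ^ 2 / 2)) -
      (n : ℂ) * w n ^ 2 / 2) atTop (𝓝 (-s / 2)) := by
    have := herr.sub (hw.div_const 2)
    simpa [neg_div] using this
  refine (Complex.continuous_exp.tendsto _ |>.comp hsum).congr' ?_
  filter_upwards [hev] with n hn
  have hne : 1 + w n ≠ 0 := by
    intro h
    have : w n = -1 := by linear_combination h
    rw [this] at hn; norm_num at hn
  have : (1 + w n) ^ n = Complex.exp (n * Complex.log (1 + w n)) := by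
    rw [Complex.exp_nat_mul, Complex.exp_log hne]
  rw [this, ← Complex.exp_add, Function.comp]
  congr 1; ring

/-- `2M(cos(φ/√M) - 1) → -φ²`. -/
lemma lag_lim2 (r : ℕ → ℝ) (hr : Tendsto r atTop atTop) (φ : ℝ) :
    Tendsto (fun n => 2 * (r n) ^ 2 * (Real.cos (φ / r n) - 1)) atTop (𝓝 (-φ ^ 2)) := by
  have h0 : Tendsto (fun n => φ / r n / 2) atTop (𝓝 0) := by
    simpa using (hr.const_div_atTop φ).div_const 2
  have h1 : Tendsto (fun n => -φ ^ 2 * Real.sinc (φ / r n / 2) ^ 2) atTop (𝓝 (-φ ^ 2)) := by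
    have := ((Real.continuous_sinc.tendsto 0).comp h0).pow 2 |>.const_mul (-φ ^ 2)
    simpa using this
  refine h1.congr' ?_
  filter_upwards [hr.eventually_gt_atTop 0] with n hn
  have hc : Real.cos (φ / r n) = 1 - 2 * Real.sin (φ / r n / 2) ^ 2 := by
    have := Real.cos_two_mul (φ / r n / 2)
    have h2 := Real.sin_sq_add_cos_sq (φ / r n / 2)
    rw [mul_div_cancel₀ _ (two_ne_zero)] at this
    linarith
  rw [hc]
  by_cases hφ : φ = 0
  · simp [hφ]
  have hne : φ / r n / 2 ≠ 0 := by positivity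
  rw [Real.sinc_of_ne_zero hne]
  field_simp
  ring

lemma lag_main (s : ℝ) (hs : 0 < s) :
    Tendsto (fun n : ℕ => (∑ k ∈ Finset.range (n + 1), (n.choose k : ℝ) * s ^ k / k.factorial) *
      (√(√(s * n)) * Real.exp (-2 * √(s * n)))) atTop (𝓝 (Real.exp (-s / 2) * (2 * √π)⁻¹)) := by
  set M : ℕ → ℝ := fun n => √(s * n) with hMdef
  set r : ℕ → ℝ := fun n => √(M n) with hrdef
  have hM2 : ∀ n : ℕ, M n ^ 2 = s * n := fun n => Real.sq_sqrt (by positivity)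
  have hr2 : ∀ n, r n ^ 2 = M n := fun n => Real.sq_sqrt (Real.sqrt_nonneg _)
  have hMt : Tendsto M atTop atTop :=
    Real.tendsto_sqrt_atTop.comp (tendsto_natCast_atTop_atTop.const_mul_atTop hs)
  have hrt : Tendsto r atTop atTop := Real.tendsto_sqrt_atTop.comp hMt
  set G : ℕ → ℝ → ℂ := fun n θ => Complex.exp (-2 * M n) *
    ((1 + (s / M n : ℝ) * Complex.exp (-(θ * Complex.I))) ^ n *
      Complex.exp (M n * Complex.exp (θ * Complex.I))) with hG
  set F : ℕ → ℝ → ℂ := fun n =>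
    (Set.Ioc (-π * r n) (π * r n)).indicator (fun φ => G n (φ / r n)) with hF
  have hr0 : ∀ n, 0 ≤ r n := fun n => Real.sqrt_nonneg _
  have hint : ∀ n : ℕ, 0 < M n → ∫ φ, F n φ = ((2 * π * ((∑ k ∈ Finset.range (n + 1),
      (n.choose k : ℝ) * s ^ k / k.factorial) * (r n * Real.exp (-2 * M n))) : ℝ) : ℂ) := by
    intro n hn
    have hrn : 0 < r n := Real.sqrt_pos.mpr hn
    rw [hF]
    simp only
    rw [integral_indicator measurableSet_Ioc, ← intervalIntegral.integral_of_le
      (by nlinarith [Real.pi_pos, mul_pos Real.pi_pos hrn]),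
      intervalIntegral.integral_comp_div (G n) hrn.ne', mul_div_cancel_right₀ _ hrn.ne',
      mul_div_cancel_right₀ _ hrn.ne', hG]
    simp only
    rw [intervalIntegral.integral_const_mul, lag_rep s (M n) hn n]
    rw [Complex.real_smul]
    push_cast
    ring
  have hlim : Tendsto (fun n => ∫ φ, F n φ) atTop
      (𝓝 (∫ φ : ℝ, ((Real.exp (-s / 2) * Real.exp (-1 * φ ^ 2) : ℝ) : ℂ))) := by
    refine tendsto_integral_of_dominated_convergence
      (fun φ => Real.exp (s / 2) * Real.exp (-(4 / π ^ 2) * φ ^ 2)) ?_ ?_ ?_ ?_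
    · intro n
      refine AEStronglyMeasurable.indicator ?_ measurableSet_Ioc
      apply Continuous.aestronglyMeasurable
      simp only [hG]
      fun_prop
    · exact (integrable_exp_neg_mul_sq (by positivity)).const_mul _
    · intro n
      refine Eventually.of_forall fun φ => ?_
      by_cases hφ : φ ∈ Set.Ioc (-π * r n) (π * r n)
      · have hrn : 0 < r n := by
          rcases (hr0 n).eq_or_lt with h | h
          · rw [← h] at hφ; simp at hφ
          · exact h
        have hMn : 0 < M n := by rw [← hr2]; positivity
        rw [hF]
        simp only [Set.indicator_of_mem hφ]
        refine (lag_bound s (M n) hMn hs n (hM2 n) (φ / r n) ?_).trans_eq ?_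
        · rw [abs_div, abs_of_pos hrn, div_le_iff₀ hrn, abs_le]
          exact ⟨by linarith [hφ.1], hφ.2⟩
        · rw [← hr2 n]
          congr 2
          field_simp
      · rw [hF]
        simp only [Set.indicator_of_notMem hφ, norm_zero]
        positivity
    · refine Eventually.of_forall fun φ => ?_
      have hθ : Tendsto (fun n => φ / r n) atTop (𝓝 0) := hrt.const_div_atTop φ
      have hsM : Tendsto (fun n => s / M n) atTop (𝓝 0) := hMt.const_div_atTop s
      have hE : Tendsto (fun n => Complex.exp (-(((φ / r n : ℝ) : ℂ) * Complex.I))) atTop (𝓝 1) := by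
        have hc : Continuous (fun x : ℝ => Complex.exp (-((x : ℂ) * Complex.I))) := by fun_prop
        have h := (hc.tendsto 0).comp hθ
        simp only [Complex.ofReal_zero, zero_mul, neg_zero, Complex.exp_zero] at h
        exact h
      have hw0 : Tendsto (fun n => ((s / M n : ℝ) : ℂ) *
          Complex.exp (-(((φ / r n : ℝ) : ℂ) * Complex.I))) atTop (𝓝 0) := by
        have : Tendsto (fun n => ((s / M n : ℝ) : ℂ)) atTop (𝓝 ((0 : ℝ) : ℂ)) :=
          (Complex.continuous_ofReal.tendsto 0).comp hsM
        simpa using this.mul hE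
      have hw1 : Tendsto (fun n : ℕ => (n : ℂ) * (((s / M n : ℝ) : ℂ) *
          Complex.exp (-(((φ / r n : ℝ) : ℂ) * Complex.I))) ^ 2) atTop (𝓝 (s : ℂ)) := by
        have := (hE.pow 2).const_mul (s : ℂ)
        rw [one_pow, mul_one] at this
        refine this.congr' ?_
        filter_upwards [hMt.eventually_gt_atTop 0] with n hn
        have h1 : (n : ℂ) * ((s / M n : ℝ) : ℂ) ^ 2 = s := by
          have : (n : ℝ) * (s / M n) ^ 2 = s := by
            rw [div_pow, hM2]
            have : (n : ℝ) ≠ 0 := by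
              intro h; have := hM2 n; rw [h] at this; simp at this; exact hn.ne' this
            field_simp
          exact_mod_cast this
        rw [mul_pow, ← mul_assoc, h1]
      have hl1 := lag_lim1 _ _ hw0 hw1
      have hl2 := (Complex.continuous_ofReal.tendsto _).comp
        ((Real.continuous_exp.tendsto _).comp (lag_lim2 r hrt φ))
      have hl := hl1.mul hl2
      have hval : Complex.exp (-(s:ℂ) / 2) * ((Real.exp (-φ ^ 2) : ℝ) : ℂ) =
          ((Real.exp (-s / 2) * Real.exp (-1 * φ ^ 2) : ℝ) : ℂ) := by
        push_cast; rw [neg_one_mul]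
      rw [hval] at hl
      refine hl.congr' ?_
      filter_upwards [hMt.eventually_gt_atTop 0, hrt.eventually_gt_atTop (|φ|)] with n hn hrn
      have hφ : φ ∈ Set.Ioc (-π * r n) (π * r n) := by
        have h3 := Real.pi_gt_three
        have h4 := abs_lt.mp hrn
        have h5 : 0 ≤ |φ| := abs_nonneg _
        constructor <;> nlinarith
      rw [hF]
      simp only [Set.indicator_of_mem hφ, hG, Function.comp]
      set θ := φ / r n
      have h1 : (n : ℂ) * ((s / M n : ℝ) : ℂ) = M n := by
        have : (n : ℝ) * (s / M n) = M n := by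
          field_simp; rw [hM2]; ring
        exact_mod_cast this
      rw [← mul_assoc (n : ℂ), h1, hr2, mul_assoc, mul_left_comm (Complex.exp (-2 * (M n : ℂ)))]
      congr 1
      rw [Complex.ofReal_exp, ← Complex.exp_add, ← Complex.exp_add]
      congr 1
      push_cast
      rw [Complex.cos, neg_mul (θ : ℂ) Complex.I]
      ring
  have hval : (∫ φ : ℝ, ((Real.exp (-s / 2) * Real.exp (-1 * φ ^ 2) : ℝ) : ℂ)) =
      ((Real.exp (-s / 2) * √π : ℝ) : ℂ) := by
    rw [integral_complex_ofReal, integral_const_mul, integral_gaussian]; simp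
  rw [hval] at hlim
  have hlim2 := (Complex.continuous_re.tendsto _).comp hlim
  have hlim3 := hlim2.div_const (2 * π)
  have hv : ((Real.exp (-s / 2) * √π : ℝ) : ℂ).re / (2 * π) = Real.exp (-s / 2) * (2 * √π)⁻¹ := by
    rw [Complex.ofReal_re]
    have : √π ≠ 0 := by positivity
    nth_rw 2 [← Real.sq_sqrt Real.pi_pos.le]
    field_simp
  rw [hv] at hlim3
  refine hlim3.congr' ?_
  filter_upwards [hMt.eventually_gt_atTop 0] with n hn
  rw [Function.comp, hint n hn, Complex.ofReal_re]
  exact mul_div_cancel_left₀ _ (by positivity)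

/-- **Perron's asymptotics for Laguerre polynomials.**
Let `(P n)` be the orthonormal polynomials for the weight `exp(−x)` on `[0,∞)`.
Then for every fixed `t < 0`,
`P_N(t) ≃ (−1)^N (2√π)^{−1} (−tN)^{−1/4} exp(2√(−tN) + t/2)` as `N → ∞`. -/
theorem perron_asymptotics_laguerre
    (P : ℕ → Polynomial ℝ)
    (hdeg : ∀ n, (P n).natDegree = n)
    (hlead : ∀ n, 0 < (P n).leadingCoeff)
    (horth : ∀ m n, (∫ x in Set.Ioi (0:ℝ),
      (P m).eval x * (P n).eval x * Real.exp (-x)) = if m = n then 1 else 0)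
    (t : ℝ) (ht : t < 0) :
    Tendsto (fun N : ℕ =>
      (P N).eval t /
        ((-1 : ℝ) ^ N * (2 * Real.sqrt π)⁻¹ * (-t * N) ^ (-(1/4) : ℝ) *
          Real.exp (2 * Real.sqrt (-t * N) + t / 2)))
      atTop (nhds 1) := by
  have hs : 0 < -t := by linarith
  have hm := lag_main (-t) hs
  have hc : Real.exp (- -t / 2) * (2 * √π)⁻¹ ≠ 0 := by positivity
  have hm2 := hm.div_const (Real.exp (- -t / 2) * (2 * √π)⁻¹)
  rw [div_self hc] at hm2
  refine hm2.congr' ?_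
  filter_upwards [eventually_gt_atTop 0] with N hN
  have hN' : (0:ℝ) < N := by exact_mod_cast hN
  have hx : 0 < -t * N := by positivity
  have he := lag_eval P hdeg hlead horth N (-t)
  rw [neg_neg] at he
  rw [he]
  set S := ∑ k ∈ Finset.range (N + 1), (N.choose k : ℝ) * (-t) ^ k / k.factorial
  set x := -t * (N : ℝ)
  have hq : x ^ (-(1/4) : ℝ) = (√(√x))⁻¹ := by
    rw [Real.rpow_neg hx.le, Real.sqrt_eq_rpow, Real.sqrt_eq_rpow, ← Real.rpow_mul hx.le]
    norm_num
  have hqp : 0 < √(√x) := by positivity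
  have hp : 0 < √π := by positivity
  have h1 : ((-1:ℝ)) ^ N ≠ 0 := by simp
  rw [hq, Real.exp_add, show - -t / 2 = t / 2 by ring, neg_mul, Real.exp_neg]
  field_simp
end

section
/- Fix β > 1/2, and let λ_N, (P_n), K_{jj} be as in the context. Then lim_{N→∞} (λ_N/(2π)) · ∑_{j=0}^N K_{jj} = 1; that is, the lower bound λ_N ≥ 2π/∑_{j=0}^N K_{jj} is asymptotically sharp. -/
open MeasureTheory Real Filter Topology Polynomial

lemma HK.bound (β : ℝ) (hβ : 1/2 < β) (c : ℝ) (hc : 0 < c): ∃ C, ∀ x > 0, c * √x ≤ x ^ β / 2 + C := by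
  have hX : 0 < (2 * c) ^ (1 / (β - 1/2)) := by positivity
  refine ⟨c * √((2 * c) ^ (1 / (β - 1/2))), fun x hx => ?_⟩
  rcases le_total x ((2 * c) ^ (1 / (β - 1/2))) with h | h
  · have := Real.sqrt_le_sqrt h
    have : 0 ≤ x ^ β / 2 := by positivity
    nlinarith
  · have h1 : 2 * c ≤ x ^ (β - 1/2) := by
      have := Real.rpow_le_rpow hX.le h (show 0 ≤ β - 1/2 by linarith)
      rwa [← Real.rpow_mul (by positivity), one_div_mul_cancel (by linarith), Real.rpow_one] at this
    have h2 : x ^ β = x ^ (β - 1/2) * √x := by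
      rw [Real.sqrt_eq_rpow, ← Real.rpow_add hx]; congr 1; ring
    rw [h2]
    have : 0 ≤ √x := by positivity
    have : 0 ≤ c * √((2 * c) ^ (1 / (β - 1/2))) := by positivity
    nlinarith

lemma HK.int_exp (β : ℝ) (hβ : 1/2 < β) (c : ℝ) (hc : 0 < c) (k : ℕ) :
    IntegrableOn (fun x : ℝ => x ^ k * exp (c * √x) * exp (-(x ^ β))) (Set.Ioi 0) := by
  obtain ⟨D, hD⟩ := HK.bound β hβ c hc
  have h := (integrableOn_rpow_mul_exp_neg_mul_rpow (p := β) (s := k) (b := 1/2)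
    (by have : (0:ℝ) ≤ k := by positivity
        linarith) (by linarith) (by norm_num)).const_mul (exp D)
  refine Integrable.mono' h (by 
    apply Measurable.aestronglyMeasurable
    fun_prop) ?_
  rw [ae_restrict_iff' measurableSet_Ioi]
  refine Eventually.of_forall fun x hx => ?_
  have hx : 0 < x := hx
  rw [Real.norm_of_nonneg (by positivity), mul_assoc, ← Real.exp_add, Real.rpow_natCast, mul_left_comm, ← Real.exp_add]
  apply mul_le_mul_of_nonneg_left _ (by positivity)
  apply Real.exp_le_exp.2
  have := hD x hx
  linarith

lemma HK.int_poly (β : ℝ) (hβ : 1/2 < β) (p : ℝ[X]) :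
    IntegrableOn (fun x : ℝ => p.eval x * exp (-(x ^ β))) (Set.Ioi 0) := by
  have hm : ∀ k : ℕ, IntegrableOn (fun x : ℝ => x ^ k * exp (-(x ^ β))) (Set.Ioi 0) := by
    intro k
    refine Integrable.mono' (HK.int_exp β hβ 1 one_pos k) (by 
      apply Measurable.aestronglyMeasurable
      fun_prop) ?_
    rw [ae_restrict_iff' measurableSet_Ioi]
    refine Eventually.of_forall fun x hx => ?_
    have hx : 0 < x := hx
    rw [Real.norm_of_nonneg (by positivity)]
    have : 1 ≤ exp (1 * √x) := Real.one_le_exp (by positivity)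
    have h2 : 0 ≤ x ^ k * exp (-(x ^ β)) := by positivity
    nlinarith
  simp_rw [eval_eq_sum_range, Finset.sum_mul]
  apply integrable_finsetSum
  intro i _
  simp_rw [mul_assoc]
  exact (hm i).const_mul _

noncomputable def HK.L (β : ℝ) (hβ : 1/2 < β) : ℝ[X] →ₗ[ℝ] ℝ where
  toFun p := ∫ x in Set.Ioi (0:ℝ), p.eval x * exp (-(x ^ β))
  map_add' p q := by
    rw [← integral_add (HK.int_poly β hβ p) (HK.int_poly β hβ q)]
    simp [add_mul]
  map_smul' c p := by
    simp [mul_assoc, integral_const_mul]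

lemma HK.L_pos (β : ℝ) (hβ : 1/2 < β) (p : ℝ[X]) (hp0 : p ≠ 0) (hp : ∀ x > 0, 0 ≤ p.eval x) :
    0 < HK.L β hβ p := by
  show 0 < ∫ x in Set.Ioi (0:ℝ), p.eval x * exp (-(x ^ β))
  rw [setIntegral_pos_iff_support_of_nonneg_ae _ (HK.int_poly β hβ p)]
  · have : (Set.Ioi (0:ℝ)) \ (p.roots.toFinset : Set ℝ) ⊆
      (Function.support fun x => eval x p * rexp (-x ^ β)) ∩ Set.Ioi 0 := by
      intro x hx
      refine ⟨?_, hx.1⟩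
      have := hx.2
      simp [hp0] at this
      simp [this]
    refine lt_of_lt_of_le ?_ (measure_mono this)
    rw [measure_sdiff_null ((Finset.finite_toSet _).measure_zero _)]
    simp
  · rw [EventuallyLE, ae_restrict_iff' measurableSet_Ioi]
    refine Eventually.of_forall fun x hx => ?_
    have := hp x hx
    simp; positivity

lemma HK.lim (β : ℝ) (hβ : 1/2 < β) (a b : ℝ) (ha : 0 < a) (hab : a < b)
    (g : ℕ → ℝ → ℝ) (g' : ℝ → ℝ) (A c : ℝ) (hA : 0 ≤ A) (hc : 0 < c) (hm : ∀ n, Measurable (g n))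
    (hb : ∀ n, ∀ x > 0, |g n x| ≤ A * exp (c * √x))
    (ht : ∀ x > 0, Tendsto (fun n => g n x) atTop (𝓝 (g' x)))
    (hneg : ∀ n, ∫ x in Set.Ioi (0:ℝ), (x - a) * (b - x) * g n x ^ 2 * exp (-(x ^ β)) ≤ 0) :
    ∫ x in Set.Ioi (0:ℝ), (x - a) * (b - x) * g' x ^ 2 * exp (-(x ^ β)) ≤ 0 := by
  refine le_of_tendsto (f := fun n => ∫ x in Set.Ioi (0:ℝ), (x - a) * (b - x) * g n x ^ 2 * exp (-(x ^ β)))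
    (tendsto_integral_of_dominated_convergence (fun x => A ^ 2 * 
      (x ^ 2 * exp ((2 * c) * √x) * exp (-(x ^ β)) + (a + b) * (x ^ 1 * exp ((2 * c) * √x) * exp (-(x ^ β)))
      + (a * b) * (x ^ 0 * exp ((2 * c) * √x) * exp (-(x ^ β))))) ?_ ?_ ?_ ?_)
      (Eventually.of_forall hneg)
  · intro n
    apply Measurable.aestronglyMeasurable
    have := hm n
    fun_prop
  · have h := HK.int_exp β hβ (2 * c) (by linarith)
    exact (((h 2).add ((h 1).const_mul _)).add ((h 0).const_mul _)).const_mul _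
  · intro n
    rw [ae_restrict_iff' measurableSet_Ioi]
    refine Eventually.of_forall fun x hx => ?_
    have hx : 0 < x := hx
    have h1 := hb n x hx
    have h2 : |(x - a) * (b - x)| ≤ x ^ 2 + (a + b) * x + a * b := by
      rw [abs_le]
      constructor <;> nlinarith [mul_pos ha hx, mul_pos (ha.trans hab) hx, mul_pos ha (ha.trans hab), sq_nonneg x]
    rw [norm_mul, norm_mul, Real.norm_eq_abs, Real.norm_of_nonneg (exp_pos _).le, norm_pow, Real.norm_eq_abs]
    have h3 : |g n x| ^ 2 ≤ A ^ 2 * exp ((2 * c) * √x) := by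
      calc |g n x| ^ 2 ≤ (A * exp (c * √x)) ^ 2 := by gcongr
        _ = _ := by rw [mul_pow, ← Real.exp_nat_mul]; congr 2; push_cast; ring
    calc _ ≤ (x ^ 2 + (a + b) * x + a * b) * (A ^ 2 * exp ((2 * c) * √x)) * exp (-(x ^ β)) := by
          have := (abs_nonneg _).trans h2
          gcongr
      _ = _ := by ring
  · rw [ae_restrict_iff' measurableSet_Ioi]
    refine Eventually.of_forall fun x hx => ?_
    exact ((((ht x hx).pow 2).const_mul _).mul_const _)

lemma HK.step1 (β : ℝ) (hβ : 1/2 < β) (a b : ℝ) (ha : 0 < a) (hab : a < b)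
    (hneg : ∀ q : ℝ[X], ∫ x in Set.Ioi (0:ℝ), (x - a) * (b - x) * (q.eval x) ^ 2 * exp (-(x ^ β)) ≤ 0)
    (p : ℝ[X]) (ξ : ℝ) (hξ : 0 < ξ) :
    ∫ x in Set.Ioi (0:ℝ), (x - a) * (b - x) * (p.eval (cos (ξ * √x))) ^ 2 * exp (-(x ^ β)) ≤ 0 := by
  let T : ℕ → ℝ[X] := fun n => ∑ k ∈ Finset.range n, C ((-1) ^ k * ξ ^ (2 * k) / (2 * k).factorial) * X ^ k
  have hT : ∀ n, ∀ x > 0, (T n).eval x = ∑ k ∈ Finset.range n, (-1) ^ k * (ξ * √x) ^ (2 * k) / (2 * k).factorial := by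
    intro n x hx
    simp only [T, eval_finsetSum, eval_mul, eval_C, eval_pow, eval_X]
    refine Finset.sum_congr rfl fun k _ => ?_
    rw [mul_pow, pow_mul (√x), Real.sq_sqrt hx.le]
    ring
  have hTb : ∀ n, ∀ x > 0, |(T n).eval x| ≤ exp (ξ * √x) := by
    intro n x hx
    rw [hT n x hx]
    have h0 : 0 ≤ ξ * √x := by positivity
    calc _ ≤ ∑ k ∈ Finset.range n, |(-1) ^ k * (ξ * √x) ^ (2 * k) / (2 * k).factorial| :=
          Finset.abs_sum_le_sum_abs _ _
      _ = ∑ k ∈ Finset.range n, (ξ * √x) ^ (2 * k) / (2 * k).factorial := by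
          refine Finset.sum_congr rfl fun k _ => ?_
          rw [abs_div, abs_mul]
          simp [abs_of_nonneg h0]
      _ ≤ cosh (ξ * √x) := sum_le_hasSum _ (fun i _ => by positivity) (Real.hasSum_cosh _)
      _ ≤ _ := by
          rw [← Real.cosh_add_sinh]
          have := Real.sinh_nonneg_iff.2 h0
          linarith
  refine HK.lim β hβ a b ha hab (fun n x => (p.comp (T n)).eval x) _ (∑ i ∈ Finset.range (p.natDegree + 1), |p.coeff i|) 
    (p.natDegree * ξ + 1) (by positivity) (by positivity) (fun n => by fun_prop) ?_ ?_ (fun n => hneg _)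
  · intro n x hx
    simp only [eval_comp]
    rw [eval_eq_sum_range, Finset.sum_mul]
    refine (Finset.abs_sum_le_sum_abs _ _).trans (Finset.sum_le_sum fun i hi => ?_)
    rw [abs_mul, abs_pow]
    gcongr
    refine (pow_le_pow_left₀ (abs_nonneg _) (hTb n x hx) i).trans ?_
    rw [← Real.exp_nat_mul]
    apply Real.exp_le_exp.2
    have hi' : (i:ℝ) ≤ p.natDegree := by
      have := Finset.mem_range.1 hi
      norm_cast; omega
    have h0 : 0 ≤ ξ * √x := by positivity
    have h1 : 0 ≤ √x := by positivity
    nlinarith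
  · intro x hx
    simp only [eval_comp]
    refine (p.continuous.tendsto _).comp ?_
    have := (Real.hasSum_cos (ξ * √x)).tendsto_sum_nat
    refine this.congr fun n => ?_
    rw [hT n x hx]

lemma HK.step2 (β : ℝ) (hβ : 1/2 < β) (a b : ℝ) (ha : 0 < a) (hab : a < b)
    (hneg : ∀ q : ℝ[X], ∫ x in Set.Ioi (0:ℝ), (x - a) * (b - x) * (q.eval x) ^ 2 * exp (-(x ^ β)) ≤ 0)
    (h : ℝ → ℝ) (hh : Continuous h) (B : ℝ) (hB : ∀ x, |h x| ≤ B) (ξ : ℝ) (hξ : 0 < ξ) :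
    ∫ x in Set.Ioi (0:ℝ), (x - a) * (b - x) * (h (cos (ξ * √x))) ^ 2 * exp (-(x ^ β)) ≤ 0 := by
  have hB0 : 0 ≤ B := (abs_nonneg _).trans (hB 0)
  choose p hp using fun n : ℕ => exists_polynomial_near_of_continuousOn (-1) 1 h hh.continuousOn (1 / ((n:ℝ) + 1)) (by positivity)
  refine HK.lim β hβ a b ha hab (fun n x => (p n).eval (cos (ξ * √x))) _ (B + 1) 
    1 (by positivity) (by positivity) (fun n => by fun_prop) ?_ ?_ (fun n => HK.step1 β hβ a b ha hab hneg _ _ hξ)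
  · intro n x hx
    have h1 := hp n _ (Real.cos_mem_Icc (ξ * √x))
    have h2 := hB (cos (ξ * √x))
    have h3 : 1 / ((n:ℝ) + 1) ≤ 1 := by
      rw [div_le_one (by positivity)]; linarith [Nat.cast_nonneg (α := ℝ) n]
    have h4 : 1 ≤ exp (1 * √x) := Real.one_le_exp (by positivity)
    have h5 : |(p n).eval (cos (ξ * √x))| ≤ B + 1 := by
      rw [abs_lt] at h1; rw [abs_le] at h2 ⊢
      constructor <;> linarith
    nlinarith
  · intro x hx
    rw [tendsto_iff_dist_tendsto_zero]
    refine squeeze_zero (fun _ => dist_nonneg) (fun n => (hp n _ (Real.cos_mem_Icc (ξ * √x))).le) ?_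
    exact tendsto_one_div_add_atTop_nhds_zero_nat

lemma HK.exists_q (β : ℝ) (hβ : 1/2 < β) (a b : ℝ) (ha : 0 < a) (hab : a < b) :
    ∃ q : ℝ[X], 0 < HK.L β hβ ((X - C a) * (C b - X) * q ^ 2) := by
  by_contra! hcon
  have hneg : ∀ q : ℝ[X], ∫ x in Set.Ioi (0:ℝ), (x - a) * (b - x) * (q.eval x) ^ 2 * exp (-(x ^ β)) ≤ 0 := by
    intro q
    have := hcon q
    simpa [HK.L] using this
  let ψ : ℝ → ℝ := fun t => max 0 ((t ^ 2 - a) * (b - t ^ 2))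
  have hψ : ∀ t, |ψ t| ≤ (b - a) ^ 2 := by
    intro t
    simp only [ψ]
    rw [abs_of_nonneg (le_max_left _ _)]
    apply max_le (by positivity)
    nlinarith [sq_nonneg (t ^ 2 - a), sq_nonneg (b - t ^ 2), sq_nonneg (t ^ 2 - a - (b - t ^ 2))]
  have hψc : Continuous ψ := by fun_prop
  have key : ∫ x in Set.Ioi (0:ℝ), (x - a) * (b - x) * (ψ (√x)) ^ 2 * exp (-(x ^ β)) ≤ 0 := by
    refine HK.lim β hβ a b ha hab (fun n x => ψ (arccos (cos ((π / (n + 1 : ℕ)) * √x)) / (π / (n + 1 : ℕ)))) _ ((b - a) ^ 2) 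
      1 (by positivity) (by positivity) (fun n => ?_) ?_ ?_ (fun n => ?_)
    · apply Continuous.measurable
      fun_prop
    · intro n x hx
      have h4 : 1 ≤ exp (1 * √x) := Real.one_le_exp (by positivity)
      refine (hψ _).trans ?_
      nlinarith [sq_nonneg (b - a)]
    · intro x hx
      apply tendsto_const_nhds.congr'
      filter_upwards [eventually_ge_atTop ⌈√x⌉₊] with n hn
      have hn : √x ≤ (n + 1 : ℕ) := by
        have := Nat.ceil_le.1 hn
        push_cast; linarith
      have hpos : 0 < ((n + 1 : ℕ) : ℝ) := by positivity
      rw [arccos_cos (by positivity)]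
      · congr 1
        field_simp
      · rw [div_mul_eq_mul_div, div_le_iff₀ hpos]
        gcongr
    · exact HK.step2 β hβ a b ha hab hneg (fun u => ψ (arccos u / (π / (n + 1 : ℕ)))) (by fun_prop)
        ((b - a) ^ 2) (fun _ => hψ _) _ (by positivity)
  apply not_lt.2 key
  have hnn : ∀ x > 0, 0 ≤ (x - a) * (b - x) * (ψ (√x)) ^ 2 * exp (-(x ^ β)) := by
    intro x hx
    simp only [ψ, Real.sq_sqrt hx.le]
    rcases le_total 0 ((x - a) * (b - x)) with h | h
    · positivity
    · rw [max_eq_left h]; simp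
  rw [setIntegral_pos_iff_support_of_nonneg_ae]
  · have : Set.Ioo a b ⊆ (Function.support fun x => (x - a) * (b - x) * (ψ (√x)) ^ 2 * exp (-(x ^ β))) ∩ Set.Ioi 0 := by
      intro x hx
      have hx0 : 0 < x := ha.trans hx.1
      refine ⟨?_, hx0⟩
      have h : 0 < ((x - a) * (b - x)) := mul_pos (by linarith [hx.1]) (by linarith [hx.2])
      apply ne_of_gt
      simp only [ψ, Real.sq_sqrt hx0.le]
      rw [max_eq_right h.le]
      positivity
    refine lt_of_lt_of_le ?_ (measure_mono this)
    simp [hab]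
  · rw [EventuallyLE, ae_restrict_iff' measurableSet_Ioi]
    exact Eventually.of_forall fun x hx => hnn x hx
  · have h0 := HK.int_poly β hβ (C ((b - a) ^ 4) * ((X + C a) * (X + C b)))
    refine Integrable.mono' h0 (by
      apply Measurable.aestronglyMeasurable
      have := hψc.measurable
      fun_prop) ?_
    rw [ae_restrict_iff' measurableSet_Ioi]
    refine Eventually.of_forall fun x hx => ?_
    have hx : 0 < x := hx
    rw [Real.norm_of_nonneg (hnn x hx)]
    simp only [eval_mul, eval_C, eval_add, eval_X]
    have h1 : (x - a) * (b - x) ≤ (x + a) * (x + b) := by nlinarith [mul_pos ha hx, mul_pos ha (ha.trans hab)]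
    have h2 : ψ (√x) ^ 2 ≤ (b - a) ^ 4 := by
      rw [← sq_abs]
      calc _ ≤ ((b - a) ^ 2) ^ 2 := by gcongr; exact hψ _
        _ = _ := by ring
    have h3 : 0 < (x + a) * (x + b) := by have := ha.trans hab; positivity
    apply mul_le_mul_of_nonneg_right _ (exp_pos _).le
    calc _ ≤ (x + a) * (x + b) * (b - a) ^ 4 := mul_le_mul h1 h2 (sq_nonneg _) h3.le
      _ = _ := by ring

lemma HK.orth_low (L : ℝ[X] →ₗ[ℝ] ℝ) (P : ℕ → ℝ[X]) (hdeg : ∀ n, (P n).natDegree = n)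
    (horth : ∀ m n, L (P m * P n) = if m = n then 1 else 0)
    (n : ℕ) (g : ℝ[X]) (hg : g.degree < n) : L (P n * g) = 0 := by
  have h0 : ∀ i, P i ≠ 0 := by
    intro i hi
    have := horth i i
    simp [hi] at this
  let S : Polynomial.Sequence ℝ := ⟨P, fun i => by rw [degree_eq_natDegree (h0 i), hdeg]⟩
  have hs := S.span_degreeLT (m := n) (fun i _ => by
    rw [isUnit_iff_ne_zero, Ne, leadingCoeff_eq_zero]; exact h0 i)
  have hg' : g ∈ degreeLT ℝ n := mem_degreeLT.2 hg
  rw [← hs] at hg'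
  induction hg' using Submodule.span_induction with
  | mem x hx =>
    obtain ⟨i, hi, rfl⟩ := hx
    have := horth n i
    rw [if_neg (by simpa using (ne_of_gt hi))] at this
    exact this
  | zero => simp
  | add x y h1 h2 hx hy =>
    rw [hs] at h1 h2
    rw [mul_add, map_add, hx (mem_degreeLT.1 h1), hy (mem_degreeLT.1 h2), add_zero]
  | smul a x h1 hx =>
    rw [hs] at h1
    rw [mul_smul_comm, map_smul, hx (mem_degreeLT.1 h1), smul_zero]

lemma HK.roots_real (L : ℝ[X] →ₗ[ℝ] ℝ) (hpos : ∀ p : ℝ[X], p ≠ 0 → (∀ x > 0, 0 ≤ p.eval x) → 0 < L p)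
    (p : ℝ[X]) (n : ℕ) (hp0 : p ≠ 0) (hdeg : p.natDegree = n)
    (horth : ∀ g : ℝ[X], g.degree < n → L (p * g) = 0) :
    ∃ s : Finset ℝ, s.card = n ∧ (∀ r ∈ s, 0 < r) ∧ p = C p.leadingCoeff * Lagrange.nodal s id := by
  -- key
  have key : ∀ d q : ℝ[X], p = d * q → 0 < d.degree → (∀ x > 0, 0 ≤ d.eval x) → False := by
    intro d q hdq hd hx
    have hd0 : d ≠ 0 := by rintro rfl; simp at hd
    have hq0 : q ≠ 0 := by rintro rfl; simp at hdq; exact hp0 hdq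
    have h1 : L (p * q) = 0 := by
      apply horth
      rw [← hdeg, ← degree_eq_natDegree hp0, hdq, degree_mul, degree_eq_natDegree hd0,
        degree_eq_natDegree hq0]
      rw [degree_eq_natDegree hd0] at hd
      norm_cast at hd ⊢
      omega
    have h2 : 0 < L (p * q) := by
      apply hpos _ (mul_ne_zero hp0 hq0)
      intro x hx0
      rw [hdq]
      have := hx x hx0
      simp only [eval_mul]
      rw [mul_assoc]
      exact mul_nonneg this (mul_self_nonneg _)
    linarith
  have hdX : ∀ r : ℝ, 0 < (X - C r).degree := by intro r; simp
  have hsplit : p.Splits := by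
    suffices hirr : ∀ g : ℝ[X], Irreducible g → g ∣ p → degree g = 1 by
      obtain ⟨u, hu⟩ := UniqueFactorizationMonoid.factors_prod hp0
      rw [← hu]
      refine (Splits.multisetProd fun g hg ↦ ?_).mul u.isUnit.splits
      exact Splits.of_degree_eq_one (hirr _ (UniqueFactorizationMonoid.irreducible_of_factor g hg)
        (UniqueFactorizationMonoid.dvd_of_mem_factors hg))
    intro g hg hgp
    obtain ⟨z, hz⟩ := Complex.exists_root (f := g.map (algebraMap ℝ ℂ)) (by
      rw [degree_map]; exact hg.degree_pos)
    have hz' : aeval z g = 0 := by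
      rw [aeval_def, ← eval_map]; exact hz
    by_cases him : z.im = 0
    · have : g.eval z.re = 0 := by
        have hzz : z = (z.re : ℂ) := by apply Complex.ext <;> simp [him]
        rw [hzz] at hz'
        have := aeval_algebraMap_apply_eq_algebraMap_eval z.re g (A := ℂ)
        simp at this
        rw [this] at hz'
        exact_mod_cast hz'
      exact degree_eq_one_of_irreducible_of_root hg this
    · exfalso
      obtain ⟨q, hq⟩ := (g.quadratic_dvd_of_aeval_eq_zero_im_ne_zero hz' him).trans hgp
      refine key _ q hq ?_ ?_
      · have : (X ^ 2 - C (2 * z.re) * X + C (‖z‖ ^ 2)).degree = 2 := by compute_degree!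
        rw [this]; norm_num
      · intro x _
        simp only [eval_add, eval_sub, eval_mul, eval_pow, eval_X, eval_C]
        rw [← Complex.normSq_eq_norm_sq, Complex.normSq_apply]
        nlinarith [sq_nonneg (x - z.re), sq_nonneg z.im]
  have hnd : p.roots.Nodup := by
    rw [Multiset.nodup_iff_count_le_one]
    intro r
    by_contra! h
    rw [count_roots] at h
    obtain ⟨q, hq⟩ := (le_rootMultiplicity_iff hp0).1 (show 2 ≤ _ from h)
    refine key _ q hq (by simp) ?_
    intro x _
    simp; positivity
  refine ⟨p.roots.toFinset, ?_, ?_, ?_⟩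
  · rw [Multiset.toFinset_card_of_nodup hnd, ← hdeg, hsplit.natDegree_eq_card_roots]
  · intro r hr
    by_contra! h
    simp [hp0] at hr
    obtain ⟨q, hq⟩ := dvd_iff_isRoot.2 hr
    refine key _ q hq (by simp) ?_
    intro x hx
    simp; linarith
  · conv_lhs => rw [hsplit.eq_prod_roots]
    congr 1
    rw [Lagrange.nodal, Finset.prod, Multiset.toFinset_val, hnd.dedup]; rfl

/-- Gauss quadrature -/
lemma HK.gauss (L : ℝ[X] →ₗ[ℝ] ℝ) (hpos : ∀ p : ℝ[X], p ≠ 0 → (∀ x > 0, 0 ≤ p.eval x) → 0 < L p)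
    (p : ℝ[X]) (n : ℕ) (hp0 : p ≠ 0) 
    (horth : ∀ g : ℝ[X], g.degree < n → L (p * g) = 0) 
    (s : Finset ℝ) (hs : s.card = n) (hps : p = C p.leadingCoeff * Lagrange.nodal s id) :
    ∃ w : ℝ → ℝ, (∀ r ∈ s, 0 < w r) ∧ ∀ f : ℝ[X], f.degree < (2 * n : ℕ) → 
      L f = ∑ r ∈ s, w r * f.eval r := by
  have hinj : Set.InjOn (id : ℝ → ℝ) s := Function.injective_id.injOn
  have hlow : ∀ f : ℝ[X], f.degree < n → L f = ∑ r ∈ s, L (Lagrange.basis s id r) * f.eval r := by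
    intro f hf
    conv_lhs => rw [Lagrange.eq_interpolate (f := f) hinj (by rw [hs]; exact hf)]
    simp only [Lagrange.interpolate_apply, map_sum, ← smul_eq_C_mul, map_smul]
    simp [mul_comm]
  have hall : ∀ f : ℝ[X], f.degree < (2 * n : ℕ) → L f = ∑ r ∈ s, L (Lagrange.basis s id r) * f.eval r := by
    intro f hf
    have hdp : p.degree = n := by
      rw [hps, degree_C_mul (by simpa using hp0), Lagrange.degree_nodal, hs]
    have hq : (f / p).degree < n := by
      by_cases h : p.degree ≤ f.degree
      · have h1 := degree_add_div hp0 h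
        have h2 : f ≠ 0 := by rintro rfl; simp [hp0] at h
        have h3 : f / p ≠ 0 := by
          intro h3; simp [h3] at h1; exact h2 (degree_eq_bot.1 h1.symm)
        rw [hdp] at h1
        rw [degree_eq_natDegree h2] at h1 hf
        rw [degree_eq_natDegree h3] at h1 ⊢
        norm_cast at *
        omega
      · rw [(Polynomial.div_eq_zero_iff hp0).2 (not_le.1 h)]
        simp
    have hm := EuclideanDomain.div_add_mod f p
    conv_lhs => rw [← hm]
    rw [map_add, horth _ hq, zero_add, hlow _ (by rw [← hdp]; exact EuclideanDomain.mod_lt f hp0)]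
    apply Finset.sum_congr rfl
    intro r hr
    congr 1
    conv_rhs => rw [← hm]
    have : p.eval r = 0 := by
      rw [hps, eval_mul]
      have := Lagrange.eval_nodal_at_node (v := id) hr
      simp at this
      simp [this]
    simp [this]
  refine ⟨_, ?_, hall⟩
  intro r hr
  have hb0 := Lagrange.basis_ne_zero hinj hr
  have h1 : 0 < L (Lagrange.basis s id r ^ 2) := by
    apply hpos _ (pow_ne_zero 2 hb0)
    intro x _; simp; positivity
  have h2 := hall (Lagrange.basis s id r ^ 2) (by
    rw [degree_pow, Lagrange.degree_basis hinj hr, hs]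
    have : 0 < n := by rw [← hs]; exact Finset.card_pos.2 ⟨r, hr⟩
    norm_cast
    simp; omega)
  rw [Finset.sum_eq_single_of_mem r hr] at h2
  · have := Lagrange.eval_basis_self hinj hr
    simp at this
    simp [this] at h2
    linarith
  · intro b hb hbr
    have := Lagrange.eval_basis_of_ne (v := (id : ℝ → ℝ)) hbr.symm hb
    simp at this
    simp [this]

/-- roots in every interval -/
lemma HK.root_in (L : ℝ[X] →ₗ[ℝ] ℝ) 
    (a b : ℝ) (hab : a < b) (q : ℝ[X]) (hq : 0 < L ((X - C a) * (C b - X) * q ^ 2)) :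
    ∀ᶠ n in atTop, ∀ (s : Finset ℝ) (w : ℝ → ℝ), (∀ r ∈ s, 0 < w r) → 
      (∀ f : ℝ[X], f.degree < (2 * n : ℕ) → L f = ∑ r ∈ s, w r * f.eval r) → 
      ∃ r ∈ s, a < r ∧ r < b := by
  filter_upwards [eventually_gt_atTop (((X - C a) * (C b - X) * q ^ 2)).natDegree] with n hn s w hw hf
  rw [hf _ (lt_of_le_of_lt degree_le_natDegree (by norm_cast; omega))] at hq
  by_contra! hc
  apply not_le.2 hq
  apply Finset.sum_nonpos
  intro r hr
  have := hc r hr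
  have h1 : (r - a) * (b - r) ≤ 0 := by
    by_cases har : a < r
    · have := this har
      nlinarith
    · have : r ≤ a := not_lt.1 har
      nlinarith
  simp
  have := hw r hr
  have h2 : (r-a)*(b-r)*(q.eval r)^2 ≤ 0 := mul_nonpos_of_nonpos_of_nonneg h1 (by positivity)
  exact mul_nonpos_of_nonneg_of_nonpos this.le h2

/-- point on the circle -/
noncomputable def HK.e (φ : ℝ) : ℂ := Complex.exp (φ * Complex.I)

lemma HK.e_cont : Continuous HK.e := by unfold HK.e; fun_prop

noncomputable def HK.l (s : Finset ℝ) (r : ℝ) (z : ℂ) : ℂ := aeval z (Lagrange.basis s id r)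

lemma HK.l_cont (s : Finset ℝ) (r : ℝ) : Continuous (HK.l s r) := by
  unfold HK.l; fun_prop

noncomputable def HK.G (s : Finset ℝ) (w : ℝ → ℝ) (φ : ℝ) : ℝ := ∑ r ∈ s, ‖HK.l s r (HK.e φ)‖ ^ 2 / w r

lemma HK.G_cont (s : Finset ℝ) (w : ℝ → ℝ) : Continuous (HK.G s w) := by
  unfold HK.G
  have := HK.e_cont
  have h := HK.l_cont s
  refine continuous_finsetSum _ fun r _ => ?_
  have := h r
  fun_prop

lemma HK.l_eq (s : Finset ℝ) (r : ℝ) (z : ℂ) :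
    HK.l s r z = ∏ j ∈ s.erase r, (((r - j : ℝ)⁻¹ : ℝ) : ℂ) * (z - j) := by
  simp [HK.l, Lagrange.basis, Lagrange.basisDivisor, map_prod]

lemma HK.norm_e_sub (φ x : ℝ) : ‖HK.e φ - x‖ ^ 2 = 1 + x ^ 2 - 2 * x * cos φ := by
  rw [← Complex.normSq_eq_norm_sq, HK.e, Complex.exp_mul_I, Complex.normSq_apply]
  simp [← Complex.ofReal_cos, ← Complex.ofReal_sin]
  nlinarith [Real.sin_sq_add_cos_sq φ]

lemma HK.fac_le (φ φ' κ x : ℝ) (hκ : 0 ≤ κ) (hκ2 : κ ≤ 2) (h : κ ≤ cos φ - cos φ') (hx : 0 < x) :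
    ‖HK.e φ - x‖ ^ 2 ≤ ‖HK.e φ' - x‖ ^ 2 ∧ 
     (1 ≤ x → x ≤ 2 → ‖HK.e φ - x‖ ^ 2 ≤ (1 - κ / 9) * ‖HK.e φ' - x‖ ^ 2) := by
  simp only [HK.norm_e_sub]
  constructor
  · nlinarith
  · intro h1 h2
    have : 1 + x ^ 2 - 2 * x * cos φ' ≤ 9 := by
      nlinarith [Real.neg_one_le_cos φ']
    nlinarith

lemma HK.l_le (s : Finset ℝ) (hs : ∀ r ∈ s, 0 < r) (r : ℝ) (φ φ' κ : ℝ) (hκ : 0 ≤ κ) (hκ2 : κ ≤ 2)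
    (h : κ ≤ cos φ - cos φ') (M : ℕ) (hM : M + 1 ≤ (s.filter (fun x => 1 ≤ x ∧ x ≤ 2)).card) :
    ‖HK.l s r (HK.e φ)‖ ^ 2 ≤ (1 - κ / 9) ^ M * ‖HK.l s r (HK.e φ')‖ ^ 2 := by
  have hq0 : 0 ≤ 1 - κ / 9 := by linarith
  have hq1 : 1 - κ / 9 ≤ 1 := by linarith
  simp only [HK.l_eq, norm_prod, norm_mul, mul_pow, ← Finset.prod_pow]
  have h1 : ∏ j ∈ s.erase r, (if 1 ≤ j ∧ j ≤ 2 then (1 - κ / 9) else 1) ≤ (1 - κ / 9) ^ M := by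
    rw [← Finset.prod_filter, Finset.prod_const]
    apply pow_le_pow_of_le_one hq0 hq1
    rw [Finset.filter_erase]
    have := Finset.pred_card_le_card_erase (s := (s.filter (fun x => 1 ≤ x ∧ x ≤ 2))) (a := r)
    omega
  have h2 : ∀ j ∈ s.erase r, ‖(((r - j : ℝ)⁻¹ : ℝ) : ℂ)‖ ^ 2 * ‖HK.e φ - j‖ ^ 2 ≤ 
      (if 1 ≤ j ∧ j ≤ 2 then (1 - κ / 9) else 1) * (‖(((r - j : ℝ)⁻¹ : ℝ) : ℂ)‖ ^ 2 * ‖HK.e φ' - j‖ ^ 2) := by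
    intro j hj
    have h3 := HK.fac_le φ φ' κ j hκ hκ2 h (hs j (Finset.mem_of_mem_erase hj))
    rw [mul_left_comm]
    apply mul_le_mul_of_nonneg_left _ (sq_nonneg _)
    split_ifs with hj2
    · exact h3.2 hj2.1 hj2.2
    · rw [one_mul]; exact h3.1
  refine (Finset.prod_le_prod (fun j _ => by positivity) h2).trans ?_
  rw [Finset.prod_mul_distrib]
  exact mul_le_mul_of_nonneg_right h1 (Finset.prod_nonneg fun j _ => by positivity)

lemma HK.G_le (s : Finset ℝ) (hs : ∀ r ∈ s, 0 < r) (w : ℝ → ℝ) (hw : ∀ r ∈ s, 0 < w r) (φ φ' κ : ℝ) (hκ : 0 ≤ κ) (hκ2 : κ ≤ 2)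
    (h : κ ≤ cos φ - cos φ') (M : ℕ) (hM : M + 1 ≤ (s.filter (fun x => 1 ≤ x ∧ x ≤ 2)).card) :
    HK.G s w φ ≤ (1 - κ / 9) ^ M * HK.G s w φ' := by
  unfold HK.G
  rw [Finset.mul_sum]
  refine Finset.sum_le_sum fun r hr => ?_
  have := hw r hr
  rw [← mul_div_assoc]
  gcongr
  exact HK.l_le s hs r φ φ' κ hκ hκ2 h M hM

lemma HK.G_nonneg (s : Finset ℝ) (w : ℝ → ℝ) (hw : ∀ r ∈ s, 0 < w r) (φ : ℝ) : 0 ≤ HK.G s w φ := 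
  Finset.sum_nonneg fun r hr => by have := hw r hr; positivity

lemma HK.concentrate (s : Finset ℝ) (hs : ∀ r ∈ s, 0 < r) (w : ℝ → ℝ) (hw : ∀ r ∈ s, 0 < w r)
    (α : ℝ) (hα : 0 < α) (hα2 : α ≤ 1/4) 
    (M : ℕ) (hM : M + 1 ≤ (s.filter (fun x => 1 ≤ x ∧ x ≤ 2)).card) :
    ∫ φ in (0:ℝ)..(2 * π), HK.G s w φ ≤ 
      (1 + 2 * π / α * (1 - (cos (α / 2) - cos α) / 9) ^ M) * ∫ φ in (π - α)..(π + α), HK.G s w φ := by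
  have hπ := Real.pi_gt_three
  set κ := cos (α / 2) - cos α with hκd
  have hκ : 0 ≤ κ := by
    have := Real.cos_le_cos_of_nonneg_of_le_pi (x := α / 2) (y := α) (by linarith) (by linarith) (by linarith)
    linarith
  have hκ2 : κ ≤ 2 := by linarith [Real.cos_le_one (α / 2), Real.neg_one_le_cos α]
  have hq0 : 0 ≤ 1 - κ / 9 := by linarith
  have hi : ∀ a b, IntervalIntegrable (HK.G s w) volume a b := fun a b => (HK.G_cont s w).intervalIntegrable a b
  have hG0 := HK.G_nonneg s w hw
  set I := ∫ φ in (π - α)..(π + α), HK.G s w φ with hI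
  have hfar : ∀ φ, cos φ ≥ - cos α → HK.G s w φ ≤ (1 - κ / 9) ^ M / α * I := by
    intro φ hφ
    have h1 : ∀ φ' ∈ Set.Icc (π - α / 2) (π + α / 2), HK.G s w φ ≤ (1 - κ / 9) ^ M * HK.G s w φ' := by
      intro φ' hφ'
      apply HK.G_le s hs w hw φ φ' κ hκ hκ2 _ M hM
      have : cos φ' ≤ - cos (α / 2) := by
        have h3 : cos φ' = - cos |φ' - π| := by rw [Real.cos_abs, Real.cos_sub_pi, neg_neg]
        rw [h3, neg_le_neg_iff]
        apply Real.cos_le_cos_of_nonneg_of_le_pi (abs_nonneg _) (by linarith)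
        rw [abs_le]; constructor <;> linarith [hφ'.1, hφ'.2]
      linarith
    have h2 := intervalIntegral.integral_mono_on (a := π - α / 2) (b := π + α / 2) (by linarith) 
      (intervalIntegrable_const (μ := volume)) ((hi _ _).const_mul _) h1
    rw [intervalIntegral.integral_const, intervalIntegral.integral_const_mul] at h2
    have h3 : ∫ φ in (π - α / 2)..(π + α / 2), HK.G s w φ ≤ I := by
      apply intervalIntegral.integral_mono_interval (by linarith) (by linarith) (by linarith) _ (hi _ _)
      exact Eventually.of_forall hG0
    have h4 : α * HK.G s w φ ≤ (1 - κ / 9) ^ M * I := by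
      have : (π + α / 2 - (π - α / 2)) • HK.G s w φ = α * HK.G s w φ := by
        rw [smul_eq_mul]; ring
      rw [this] at h2
      exact h2.trans (mul_le_mul_of_nonneg_left h3 (by positivity))
    rw [div_mul_eq_mul_div, le_div_iff₀ hα]
    linarith
  have hI0 : 0 ≤ I := intervalIntegral.integral_nonneg (by linarith) fun φ _ => hG0 φ
  have hc0 : 0 ≤ (1 - κ / 9) ^ M / α * I := by positivity
  have hA : ∫ φ in (0:ℝ)..(π - α), HK.G s w φ ≤ π * ((1 - κ / 9) ^ M / α * I) := by
    have := intervalIntegral.integral_mono_on (a := 0) (b := π - α) (by linarith) (hi _ _)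
      (intervalIntegrable_const (μ := volume)) (g := fun _ => (1 - κ / 9) ^ M / α * I) (fun φ hφ => hfar φ ?_)
    · rw [intervalIntegral.integral_const, smul_eq_mul] at this
      refine this.trans (mul_le_mul_of_nonneg_right (by linarith) hc0)
    · rw [← Real.cos_pi_sub]
      exact Real.cos_le_cos_of_nonneg_of_le_pi hφ.1 (by linarith) hφ.2
  have hB : ∫ φ in (π + α)..(2 * π), HK.G s w φ ≤ π * ((1 - κ / 9) ^ M / α * I) := by
    have := intervalIntegral.integral_mono_on (a := π + α) (b := 2 * π) (by linarith) (hi _ _)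
      (intervalIntegrable_const (μ := volume)) (g := fun _ => (1 - κ / 9) ^ M / α * I) (fun φ hφ => hfar φ ?_)
    · rw [intervalIntegral.integral_const, smul_eq_mul] at this
      refine this.trans (mul_le_mul_of_nonneg_right (by linarith) hc0)
    · rw [← Real.cos_pi_sub, ← Real.cos_two_pi_sub φ]
      exact Real.cos_le_cos_of_nonneg_of_le_pi (by linarith [hφ.2]) (by linarith) (by linarith [hφ.1])
  rw [← intervalIntegral.integral_add_adjacent_intervals (hi 0 (π - α)) (hi _ (2 * π)),
    ← intervalIntegral.integral_add_adjacent_intervals (hi (π - α) (π + α)) (hi _ (2 * π)), ← hI]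
  calc _ ≤ π * ((1 - κ / 9) ^ M / α * I) + (I + π * ((1 - κ / 9) ^ M / α * I)) := by linarith
    _ = _ := by ring

/-- the near-extremal polynomial -/
noncomputable def HK.f (s : Finset ℝ) (w : ℝ → ℝ) : ℝ[X] := 
  ∑ r ∈ s, C ((Lagrange.basis s id r).eval (-1) / w r) * Lagrange.basis s id r

noncomputable def HK.T (s : Finset ℝ) (w : ℝ → ℝ) : ℝ := 
  ∑ r ∈ s, ((Lagrange.basis s id r).eval (-1)) ^ 2 / w r

lemma HK.near (s : Finset ℝ) (hs : ∀ r ∈ s, 0 < r) (w : ℝ → ℝ) (hw : ∀ r ∈ s, 0 < w r)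
    (α : ℝ) (hα : 0 < α) (hα2 : α ≤ 1/4) (φ : ℝ) (h1 : π - α ≤ φ) (h2 : φ ≤ π + α) :
    (1 - 2 * α) ^ 2 * (HK.T s w * HK.G s w φ) ≤ (1 + 2 * α) ^ 2 * ‖aeval (HK.e φ) (HK.f s w)‖ ^ 2 := by
  set z := HK.e φ with hz
  have hz1 : ‖1 + z‖ ≤ α := by
    have : 1 + z = -(Complex.exp (Complex.I * ((φ - π : ℝ) : ℂ)) - 1) := by
      rw [hz, HK.e]; push_cast
      rw [mul_sub, Complex.exp_sub, mul_comm Complex.I π, Complex.exp_pi_mul_I, mul_comm]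
      ring
    rw [this, norm_neg]
    refine (Real.norm_exp_I_mul_ofReal_sub_one_le).trans ?_
    rw [Real.norm_eq_abs, abs_le]; constructor <;> linarith
  let D : ℂ := ∏ j ∈ s, (z - j) / (-1 - j)
  let v : ℝ → ℂ := fun r => (1 + r) / (r - z)
  let m : ℝ → ℝ := fun r => (Lagrange.basis s id r).eval (-1)
  have hne : ∀ r ∈ s, 1 - α ≤ ‖(r:ℂ) - z‖ := by
    intro r hr
    have h3 : ((r:ℂ) - z) = ((1 + r : ℝ) : ℂ) - (1 + z) := by push_cast; ring
    have h4 := norm_sub_norm_le ((1 + r : ℝ) : ℂ) (1 + z)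
    rw [← h3, Complex.norm_real, Real.norm_of_nonneg (by linarith [hs r hr])] at h4
    linarith [hs r hr]
  have hv : ∀ r ∈ s, ‖v r - 1‖ ≤ 2 * α := by
    intro r hr
    have h3 := hne r hr
    have h4 : (r:ℂ) - z ≠ 0 := by
      intro h; rw [h] at h3; simp at h3; linarith
    have : v r - 1 = (1 + z) / (r - z) := by
      simp only [v]; field_simp; ring
    rw [this, norm_div, div_le_iff₀ (by linarith)]
    nlinarith
  have hl : ∀ r ∈ s, HK.l s r z = m r * (D * v r) := by
    intro r hr
    have hm : (m r : ℂ) = HK.l s r (-1) := by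
      have := aeval_algebraMap_apply_eq_algebraMap_eval (-1:ℝ) (Lagrange.basis s id r) (A := ℂ)
      simp at this
      simp [HK.l, m, this]
    rw [hm, HK.l_eq, HK.l_eq]
    have hD : D = (∏ j ∈ s.erase r, (z - j) / (-1 - j)) * ((z - r) / (-1 - r)) := 
      (Finset.prod_erase_mul s _ hr).symm
    have h3 := hne r hr
    have h4 : (r:ℂ) - z ≠ 0 := by
      intro h; rw [h] at h3; simp at h3; linarith
    have h5 : ∀ r ∈ s, (-1 : ℂ) - r ≠ 0 := by
      intro r hr h
      have : (-1 : ℝ) - r = 0 := by exact_mod_cast h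
      linarith [hs r hr]
    have h6 : ((z - r) / (-1 - r)) * v r = 1 := by
      have := h5 r hr
      simp only [v]; field_simp; ring
    rw [hD, mul_assoc, h6, mul_one, ← Finset.prod_mul_distrib]
    refine Finset.prod_congr rfl fun j hj => ?_
    have := h5 j (Finset.mem_of_mem_erase hj)
    field_simp
  have hT0 : 0 ≤ HK.T s w := Finset.sum_nonneg fun r hr => by have := hw r hr; positivity
  have hf : aeval z (HK.f s w) = D * ∑ r ∈ s, ((m r ^ 2 / w r : ℝ) : ℂ) * v r := by
    simp only [HK.f, map_sum, map_mul, aeval_C, Finset.mul_sum]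
    refine Finset.sum_congr rfl fun r hr => ?_
    have := hl r hr
    rw [HK.l] at this
    rw [this]
    simp [m]; ring
  have hG : HK.G s w φ ≤ ‖D‖ ^ 2 * ((1 + 2 * α) ^ 2 * HK.T s w) := by
    simp only [HK.G, HK.T, Finset.mul_sum]
    refine Finset.sum_le_sum fun r hr => ?_
    rw [← hz, hl r hr, norm_mul, norm_mul, Complex.norm_real, mul_pow, Real.norm_eq_abs, sq_abs, mul_pow]
    have h3 : ‖v r‖ ≤ 1 + 2 * α := by
      have := norm_add_le (v r - 1) 1
      simp at this
      have := hv r hr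
      linarith
    have := hw r hr
    calc _ ≤ m r ^ 2 * (‖D‖ ^ 2 * (1 + 2 * α) ^ 2) / w r := by gcongr
      _ = _ := by simp [m]; ring
  have hS : (1 - 2 * α) * HK.T s w ≤ ‖∑ r ∈ s, ((m r ^ 2 / w r : ℝ) : ℂ) * v r‖ := by
    have h3 : ∑ r ∈ s, ((m r ^ 2 / w r : ℝ) : ℂ) * v r = (HK.T s w : ℂ) + 
        ∑ r ∈ s, ((m r ^ 2 / w r : ℝ) : ℂ) * (v r - 1) := by
      rw [HK.T, Complex.ofReal_sum, ← Finset.sum_add_distrib]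
      refine Finset.sum_congr rfl fun r hr => ?_
      simp only [m]; ring
    have h4 : ‖∑ r ∈ s, ((m r ^ 2 / w r : ℝ) : ℂ) * (v r - 1)‖ ≤ HK.T s w * (2 * α) := by
      refine (norm_sum_le _ _).trans ?_
      rw [HK.T, Finset.sum_mul]
      refine Finset.sum_le_sum fun r hr => ?_
      have := hw r hr
      rw [norm_mul, Complex.norm_real, Real.norm_of_nonneg (by positivity)]
      exact mul_le_mul_of_nonneg_left (hv r hr) (by positivity)
    rw [h3]
    have h5 := norm_sub_norm_le (HK.T s w : ℂ) (-∑ r ∈ s, ((m r ^ 2 / w r : ℝ) : ℂ) * (v r - 1))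
    rw [norm_neg, sub_neg_eq_add, Complex.norm_real, Real.norm_of_nonneg hT0] at h5
    linarith
  rw [hf, norm_mul, mul_pow]
  have hS2 : ((1 - 2 * α) * HK.T s w) ^ 2 ≤ ‖∑ r ∈ s, ((m r ^ 2 / w r : ℝ) : ℂ) * v r‖ ^ 2 := by
    apply pow_le_pow_left₀ _ hS
    apply mul_nonneg (by linarith) hT0
  calc _ ≤ (1 - 2 * α) ^ 2 * (HK.T s w * (‖D‖ ^ 2 * ((1 + 2 * α) ^ 2 * HK.T s w))) := by gcongr
    _ = (1 + 2 * α) ^ 2 * (‖D‖ ^ 2 * ((1 - 2 * α) * HK.T s w) ^ 2) := by ring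
    _ ≤ _ := by gcongr

lemma HK.int_cos (k : ℤ) : ∫ φ in (0:ℝ)..(2 * π), cos (k * φ) = if k = 0 then 2 * π else 0 := by
  split_ifs with h
  · simp [h]
  · have hk : (k : ℝ) ≠ 0 := by exact_mod_cast h
    rw [intervalIntegral.integral_comp_mul_left (fun x => cos x) hk, integral_cos]
    have : sin (k * (2 * π)) = 0 := by
      have := Real.sin_int_mul_pi (k * 2)
      rw [← this]; push_cast; ring_nf
    simp [this]

/-- the polynomial with given coefficients -/
noncomputable def HK.pol {n : ℕ} (v : Fin n → ℝ) : ℝ[X] := ∑ i, C (v i) * X ^ (i : ℕ)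

lemma HK.pol_deg {n : ℕ} (v : Fin n → ℝ) : (HK.pol v).degree < n := by
  unfold HK.pol
  refine (degree_sum_le _ _).trans_lt ?_
  rw [Finset.sup_lt_iff (WithBot.bot_lt_coe _)]
  intro i _
  refine (degree_C_mul_X_pow_le _ _).trans_lt ?_
  exact_mod_cast i.2

lemma HK.pol_surj {n : ℕ} (f : ℝ[X]) (hf : f.degree < n) : ∃ v : Fin n → ℝ, HK.pol v = f := by
  refine ⟨fun i => f.coeff i, ?_⟩
  unfold HK.pol
  rw [Fin.sum_univ_eq_sum_range (fun i => C (f.coeff i) * X ^ i) n]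
  by_cases h0 : f = 0
  · simp [h0]
  exact (as_sum_range_C_mul_X_pow' f ((natDegree_lt_iff_degree_lt h0).2 hf)).symm

lemma HK.parseval {n : ℕ} (v : Fin n → ℝ) :
    ∫ φ in (0:ℝ)..(2 * π), ‖aeval (HK.e φ) (HK.pol v)‖ ^ 2 = 2 * π * (v ⬝ᵥ v) := by
  have h : ∀ φ : ℝ, ‖aeval (HK.e φ) (HK.pol v)‖ ^ 2 = ∑ i, ∑ j, v i * v j * cos (((i:ℤ) - (j:ℤ) : ℤ) * φ) := by
    intro φ
    have h1 : aeval (HK.e φ) (HK.pol v) = ((∑ i, v i * cos ((i:ℕ) * φ) : ℝ) : ℂ) + ((∑ i, v i * sin ((i:ℕ) * φ) : ℝ) : ℂ) * Complex.I := by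
      simp only [HK.pol, map_sum, map_mul, aeval_C, map_pow, aeval_X, HK.e]
      push_cast
      rw [Finset.sum_mul, ← Finset.sum_add_distrib]
      refine Finset.sum_congr rfl fun i _ => ?_
      rw [← Complex.exp_nat_mul, ← mul_assoc, Complex.exp_mul_I]
      simp; ring
    rw [h1, Complex.sq_norm, Complex.normSq_add_mul_I, sq, sq, Finset.sum_mul_sum, Finset.sum_mul_sum,
      ← Finset.sum_add_distrib]
    refine Finset.sum_congr rfl fun i _ => ?_
    rw [← Finset.sum_add_distrib]
    refine Finset.sum_congr rfl fun j _ => ?_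
    push_cast
    rw [sub_mul, Real.cos_sub]
    ring
  simp_rw [h]
  rw [intervalIntegral.integral_finsetSum (fun i _ => by
    apply Continuous.intervalIntegrable; fun_prop)]
  simp_rw [dotProduct, Finset.mul_sum]
  refine Finset.sum_congr rfl fun i _ => ?_
  rw [intervalIntegral.integral_finsetSum (fun i _ => by
    apply Continuous.intervalIntegrable; fun_prop)]
  simp_rw [intervalIntegral.integral_const_mul, HK.int_cos]
  rw [Finset.sum_eq_single i]
  · simp; ring
  · intro j _ hj
    rw [if_neg, mul_zero]
    intro h
    apply hj
    ext; omega
  · simp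

lemma HK.quadform (L : ℝ[X] →ₗ[ℝ] ℝ) {n : ℕ} (H : Matrix (Fin n) (Fin n) ℝ) (hH : ∀ j k : Fin n, H j k = L (X ^ ((j:ℕ) + (k:ℕ))))
    (v : Fin n → ℝ) : L (HK.pol v ^ 2) = v ⬝ᵥ (H.mulVec v) := by
  rw [HK.pol, sq, Finset.sum_mul_sum]
  simp only [map_sum, dotProduct, Matrix.mulVec, Finset.mul_sum]
  refine Finset.sum_congr rfl fun i _ => Finset.sum_congr rfl fun j _ => ?_
  rw [hH]
  have : C (v i) * X ^ (i:ℕ) * (C (v j) * X ^ (j:ℕ)) = (v i * v j) • (X ^ ((i:ℕ) + (j:ℕ)) : ℝ[X]) := by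
    rw [smul_eq_C_mul, C_mul, pow_add]; ring
  rw [this, map_smul, smul_eq_mul]; ring

lemma HK.rayleigh {n : ℕ} (H : Matrix (Fin n) (Fin n) ℝ) (hH : H.IsHermitian) (lam : ℝ)
    (hlam : IsLeast {x : ℝ | Module.End.HasEigenvalue (Matrix.toLin' H) x} lam) (v : Fin n → ℝ) :
    lam * (v ⬝ᵥ v) ≤ v ⬝ᵥ (H.mulVec v) := by
  have hA : (H - lam • (1 : Matrix (Fin n) (Fin n) ℝ)).IsHermitian := by
    apply hH.sub
    simp [Matrix.IsHermitian, Matrix.conjTranspose_smul]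
  have hps : (H - lam • (1 : Matrix (Fin n) (Fin n) ℝ)).PosSemidef := by
    rw [hA.posSemidef_iff_eigenvalues_nonneg]
    intro i
    have h1 := hA.mulVec_eigenvectorBasis i
    rw [Matrix.sub_mulVec, Matrix.smul_mulVec, Matrix.one_mulVec] at h1
    have h2 : Module.End.HasEigenvalue (Matrix.toLin' H) (hA.eigenvalues i + lam) := by
      apply Module.End.hasEigenvalue_of_hasEigenvector (x := (hA.eigenvectorBasis i).ofLp)
      rw [Module.End.hasEigenvector_iff]
      constructor
      · rw [Module.End.mem_eigenspace_iff, Matrix.toLin'_apply, add_smul, ← h1]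
        simp
      · have := hA.eigenvectorBasis.orthonormal.ne_zero i
        simpa using this
    have := hlam.2 h2
    simp
    linarith
  have := hps.dotProduct_mulVec_nonneg v
  rw [Matrix.sub_mulVec, Matrix.smul_mulVec, Matrix.one_mulVec, dotProduct_sub, dotProduct_smul] at this
  simp at this
  linarith

lemma HK.kernel (L : ℝ[X] →ₗ[ℝ] ℝ) (P : ℕ → ℝ[X]) (hdeg : ∀ n, (P n).natDegree = n)
    (horth : ∀ m n, L (P m * P n) = if m = n then 1 else 0) (n : ℕ)
    (s : Finset ℝ) (hs : s.card = n) (w : ℝ → ℝ) (hw : ∀ r ∈ s, 0 < w r)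
    (hq : ∀ f : ℝ[X], f.degree < (2 * n : ℕ) → L f = ∑ r ∈ s, w r * f.eval r) (φ : ℝ) :
    ∑ j ∈ Finset.range n, ‖aeval (HK.e φ) (P j)‖ ^ 2 = HK.G s w φ := by
  have hinj : Set.InjOn (id : ℝ → ℝ) s := Function.injective_id.injOn
  have hPd : ∀ j : Fin n, (P j).degree < n := fun j => 
    degree_le_natDegree.trans_lt (by rw [hdeg]; exact_mod_cast j.2)
  let A : Matrix (Fin n) s ℝ := fun j r => (P j).eval (r:ℝ) * w r
  let B : Matrix s (Fin n) ℝ := fun r j => (P j).eval (r:ℝ)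
  have hAB : A * B = 1 := by
    ext i j
    rw [Matrix.mul_apply, Matrix.one_apply]
    have h1 := horth i j
    rw [hq _ (by
      refine degree_le_natDegree.trans_lt ?_
      norm_cast
      refine natDegree_mul_le.trans_lt ?_
      rw [hdeg, hdeg]; omega)] at h1
    simp only [Fin.val_inj] at h1
    rw [← h1, ← Finset.sum_coe_sort s]
    refine Finset.sum_congr rfl fun r _ => ?_
    simp only [A, B, eval_mul]; ring
  have hBA : B * A = 1 := by
    exact (Matrix.mul_eq_one_comm_of_card_eq _ _ _ (A := A) (B := B) (by simp [hs])).1 hAB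
  have hBA' : ∀ r r' : s, ∑ j : Fin n, (P j).eval (r:ℝ) * (P j).eval (r':ℝ) = if r = r' then 1 / w r else 0 := by
    intro r r'
    have h1 := congrFun (congrFun hBA r) r'
    rw [Matrix.mul_apply, Matrix.one_apply] at h1
    have hw' := hw r' r'.2
    have h2 : (∑ j : Fin n, (P j).eval (r:ℝ) * (P j).eval (r':ℝ)) * w r' = if r = r' then 1 else 0 := by
      rw [← h1, Finset.sum_mul]
      refine Finset.sum_congr rfl fun j _ => ?_
      simp only [A, B]; ring
    split_ifs at h2 ⊢ with h
    · subst h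
      rw [eq_div_iff hw'.ne']; exact h2
    · exact (mul_eq_zero.1 h2).resolve_right hw'.ne'
  have hexp : ∀ j : Fin n, aeval (HK.e φ) (P j) = ∑ r : s, (((P j).eval (r:ℝ) : ℝ) : ℂ) * HK.l s r (HK.e φ) := by
    intro j
    conv_lhs => rw [Lagrange.eq_interpolate (f := P j) hinj (by rw [hs]; exact hPd j)]
    rw [Finset.sum_coe_sort s (fun r => (((P j).eval (r:ℝ) : ℝ) : ℂ) * HK.l s r (HK.e φ))]
    simp [Lagrange.interpolate_apply, HK.l]
  have hC : ((∑ j ∈ Finset.range n, ‖aeval (HK.e φ) (P j)‖ ^ 2 : ℝ) : ℂ) = (HK.G s w φ : ℂ) := by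
    rw [← Fin.sum_univ_eq_sum_range (fun j => ‖aeval (HK.e φ) (P j)‖ ^ 2), HK.G, ← Finset.sum_coe_sort s]
    push_cast
    simp_rw [← Complex.mul_conj', hexp, map_sum, map_mul, Complex.conj_ofReal, Finset.sum_mul_sum]
    rw [Finset.sum_comm]
    refine Finset.sum_congr rfl fun r _ => ?_
    rw [Finset.sum_comm]
    rw [Finset.sum_eq_single r]
    · have := hBA' r r
      simp only [if_true] at this
      have h2 : ∑ j : Fin n, (((P j).eval (r:ℝ) : ℝ) : ℂ) * (((P j).eval (r:ℝ) : ℝ) : ℂ) = 1 / w r := by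
        exact_mod_cast congrArg (Complex.ofReal) this
      rw [div_eq_mul_one_div, ← h2, Finset.mul_sum]
      refine Finset.sum_congr rfl fun j _ => ?_
      ring
    · intro r' _ hr'
      have := hBA' r r'
      rw [if_neg (Ne.symm hr')] at this
      have h2 : ∑ j : Fin n, (((P j).eval (r:ℝ) : ℝ) : ℂ) * (((P j).eval (r':ℝ) : ℝ) : ℂ) = 0 := by
        exact_mod_cast congrArg (Complex.ofReal) this
      rw [← mul_zero (HK.l s r (HK.e φ) * (starRingEnd ℂ) (HK.l s r' (HK.e φ))), ← h2, Finset.mul_sum]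
      refine Finset.sum_congr rfl fun j _ => ?_
      ring
    · simp
  exact_mod_cast hC

lemma HK.cauchy (L : ℝ[X] →ₗ[ℝ] ℝ) (n : ℕ)
    (s : Finset ℝ) (hs : s.card = n) (w : ℝ → ℝ) (hw : ∀ r ∈ s, 0 < w r)
    (hq : ∀ f : ℝ[X], f.degree < (2 * n : ℕ) → L f = ∑ r ∈ s, w r * f.eval r)
    (f : ℝ[X]) (hf : f.degree < n) (φ : ℝ) :
    ‖aeval (HK.e φ) f‖ ^ 2 ≤ L (f ^ 2) * HK.G s w φ := by
  have hinj : Set.InjOn (id : ℝ → ℝ) s := Function.injective_id.injOn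
  have hL : L (f ^ 2) = ∑ r ∈ s, (√(w r) * |f.eval r|) ^ 2 := by
    rw [hq]
    · refine Finset.sum_congr rfl fun r hr => ?_
      rw [mul_pow, Real.sq_sqrt (hw r hr).le, sq_abs, eval_pow]
    · by_cases h0 : f = 0
      · simp only [h0, ne_eq, OfNat.ofNat_ne_zero, not_false_eq_true, zero_pow, degree_zero]
        exact WithBot.bot_lt_coe _
      rw [degree_pow, degree_eq_natDegree h0] 
      rw [degree_eq_natDegree h0] at hf
      norm_cast at hf
      norm_cast
      simp; omega
  have hG : HK.G s w φ = ∑ r ∈ s, (‖HK.l s r (HK.e φ)‖ / √(w r)) ^ 2 := by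
    refine Finset.sum_congr rfl fun r hr => ?_
    rw [div_pow, Real.sq_sqrt (hw r hr).le]
  rw [hL, hG]
  refine le_trans ?_ (Finset.sum_mul_sq_le_sq_mul_sq s _ _)
  gcongr
  conv_lhs => rw [Lagrange.eq_interpolate (f := f) hinj (by rw [hs]; exact hf)]
  simp only [Lagrange.interpolate_apply, map_sum, map_mul, aeval_C, id]
  refine (norm_sum_le _ _).trans (Finset.sum_le_sum fun r hr => ?_)
  have := Real.sqrt_pos.2 (hw r hr)
  rw [norm_mul]
  apply le_of_eq
  simp [HK.l]
  field_simp

lemma HK.L_f (L : ℝ[X] →ₗ[ℝ] ℝ) (n : ℕ)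
    (s : Finset ℝ) (hs : s.card = n) (hn : 0 < n) (w : ℝ → ℝ) (hw : ∀ r ∈ s, 0 < w r)
    (hq : ∀ f : ℝ[X], f.degree < (2 * n : ℕ) → L f = ∑ r ∈ s, w r * f.eval r) :
    (HK.f s w).degree < n ∧ L (HK.f s w ^ 2) = HK.T s w := by
  have hinj : Set.InjOn (id : ℝ → ℝ) s := Function.injective_id.injOn
  have hfi : HK.f s w = Lagrange.interpolate s id (fun r => (Lagrange.basis s id r).eval (-1) / w r) := by
    rw [Lagrange.interpolate_apply, HK.f]
  have hd : (HK.f s w).degree < n := by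
    rw [hfi, ← hs]; exact Lagrange.degree_interpolate_lt _ hinj
  refine ⟨hd, ?_⟩
  rw [hq]
  · rw [HK.T]
    refine Finset.sum_congr rfl fun r hr => ?_
    have h1 := Lagrange.eval_interpolate_at_node (fun r => (Lagrange.basis s id r).eval (-1) / w r) hinj hr
    rw [← hfi] at h1
    simp only [id] at h1
    have := hw r hr
    rw [eval_pow, h1]
    field_simp
  · refine degree_le_natDegree.trans_lt ?_
    norm_cast
    rw [natDegree_pow]
    have : (HK.f s w).natDegree < n := by
      by_cases h0 : HK.f s w = 0
      · simpa [h0] using hn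
      · exact (natDegree_lt_iff_degree_lt h0).2 hd
    omega

/-- two sided bound at fixed N -/
lemma HK.bounds (L : ℝ[X] →ₗ[ℝ] ℝ) (hpos : ∀ p : ℝ[X], p ≠ 0 → (∀ x > 0, 0 ≤ p.eval x) → 0 < L p)
    (n : ℕ) (hn : 0 < n) (H : Matrix (Fin n) (Fin n) ℝ) (hH : ∀ j k : Fin n, H j k = L (X ^ ((j:ℕ) + (k:ℕ))))
    (hherm : H.IsHermitian) (lam : ℝ)
    (hlam : IsLeast {x : ℝ | Module.End.HasEigenvalue (Matrix.toLin' H) x} lam) (hlam0 : 0 < lam)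
    (s : Finset ℝ) (hs : s.card = n) (hs0 : ∀ r ∈ s, 0 < r) (w : ℝ → ℝ) (hw : ∀ r ∈ s, 0 < w r)
    (hq : ∀ f : ℝ[X], f.degree < (2 * n : ℕ) → L f = ∑ r ∈ s, w r * f.eval r) :
    1 ≤ lam / (2 * π) * ∫ φ in (0:ℝ)..(2 * π), HK.G s w φ ∧
    ∀ α : ℝ, 0 < α → α ≤ 1/4 → ∀ M : ℕ, M + 1 ≤ (s.filter (fun x => 1 ≤ x ∧ x ≤ 2)).card → 
    lam / (2 * π) * ∫ φ in (0:ℝ)..(2 * π), HK.G s w φ ≤ 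
      (1 + 2 * π / α * (1 - (cos (α / 2) - cos α) / 9) ^ M) * ((1 + 2 * α) ^ 2 / (1 - 2 * α) ^ 2) := by
  have hπ := Real.pi_pos
  have hcf : ∀ f : ℝ[X], Continuous fun φ => ‖aeval (HK.e φ) f‖ ^ 2 := by
    intro f
    have := HK.e_cont
    have h2 : Continuous fun z : ℂ => aeval z f := by fun_prop
    exact ((h2.comp this).norm).pow 2
  constructor
  · obtain ⟨v, hv⟩ := hlam.1.exists_hasEigenvector
    have hv0 := hv.2
    have hHv : H.mulVec v = lam • v := by
      have := hv.apply_eq_smul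
      rwa [Matrix.toLin'_apply] at this
    have hvv : 0 < v ⬝ᵥ v := by
      have := (dotProduct_self_eq_zero (v := v)).not.2 hv0
      have h2 : 0 ≤ v ⬝ᵥ v := Finset.sum_nonneg fun i _ => mul_self_nonneg _
      exact lt_of_le_of_ne h2 (Ne.symm this)
    have h1 := intervalIntegral.integral_mono_on (a := 0) (b := 2 * π) (by positivity) 
      ((hcf (HK.pol v)).intervalIntegrable (μ := volume) _ _) (((HK.G_cont s w).intervalIntegrable (μ := volume) 0 (2 * π)).const_mul (L (HK.pol v ^ 2)))
      (fun φ _ => HK.cauchy L n s hs w hw hq (HK.pol v) (HK.pol_deg v) φ)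
    rw [HK.parseval, intervalIntegral.integral_const_mul, HK.quadform L H hH, hHv, dotProduct_smul, smul_eq_mul] at h1
    rw [div_mul_eq_mul_div, le_div_iff₀ (by positivity)]
    refine le_of_mul_le_mul_right ?_ hvv
    linarith
  · intro α hα hα2 M hM
    obtain ⟨hd, hT⟩ := HK.L_f L n s hs hn w hw hq
    obtain ⟨v, hv⟩ := HK.pol_surj _ hd
    have hR := HK.rayleigh H hherm lam hlam v
    rw [← HK.quadform L H hH, hv, hT] at hR
    have hPa := HK.parseval v
    rw [hv] at hPa
    have hcon := HK.concentrate s hs0 w hw α hα hα2 M hM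
    have hnear : (1 - 2 * α) ^ 2 * (HK.T s w * ∫ φ in (π - α)..(π + α), HK.G s w φ) ≤ 
        (1 + 2 * α) ^ 2 * (2 * π * (v ⬝ᵥ v)) := by
      have h1 := intervalIntegral.integral_mono_on (a := π - α) (b := π + α) (by linarith) 
        ((((HK.G_cont s w).intervalIntegrable (μ := volume) _ _).const_mul (HK.T s w)).const_mul ((1 - 2 * α) ^ 2))
        (((hcf (HK.f s w)).intervalIntegrable (μ := volume) _ _).const_mul ((1 + 2 * α) ^ 2))
        (fun φ hφ => HK.near s hs0 w hw α hα hα2 φ hφ.1 hφ.2)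
      rw [intervalIntegral.integral_const_mul, intervalIntegral.integral_const_mul, 
        intervalIntegral.integral_const_mul] at h1
      refine h1.trans ?_
      rw [← hPa]
      apply mul_le_mul_of_nonneg_left _ (sq_nonneg _)
      refine intervalIntegral.integral_mono_interval (μ := volume) (by linarith [Real.pi_gt_three]) (by linarith) (by linarith [Real.pi_gt_three]) ?_ ((hcf _).intervalIntegrable _ _)
      exact Eventually.of_forall fun φ => by positivity
    have hT0 : 0 < HK.T s w := by
      obtain ⟨r, hr⟩ := Finset.card_pos.1 (hs ▸ hn)
      apply Finset.sum_pos _ ⟨r, hr⟩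
      intro r hr
      have h1 := hw r hr
      have h2 : (Lagrange.basis s id r).eval (-1) ≠ 0 := by
        simp only [Lagrange.basis, eval_prod, Lagrange.basisDivisor]
        rw [Finset.prod_ne_zero_iff]
        intro j hj
        simp only [eval_mul, eval_C, eval_sub, eval_X, id]
        apply mul_ne_zero
        · exact inv_ne_zero (sub_ne_zero.2 (Finset.ne_of_mem_erase hj).symm)
        · have := hs0 j (Finset.mem_of_mem_erase hj)
          linarith
      positivity
    set I := ∫ φ in (π - α)..(π + α), HK.G s w φ
    set Q := 1 + 2 * π / α * (1 - (cos (α / 2) - cos α) / 9) ^ M with hQ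
    have hQ0 : 0 ≤ Q := by
      have : 0 ≤ 1 - (cos (α / 2) - cos α) / 9 := by
        linarith [Real.cos_le_one (α / 2), Real.neg_one_le_cos α]
      positivity
    have hb : 0 < (1 - 2 * α) ^ 2 := by
      have : 0 < 1 - 2 * α := by linarith
      positivity
    have hkey : lam / (2 * π) * I ≤ (1 + 2 * α) ^ 2 / (1 - 2 * α) ^ 2 := by
      rw [div_mul_eq_mul_div, div_le_div_iff₀ (by positivity) hb]
      refine le_of_mul_le_mul_right ?_ hT0
      have h1 : lam * ((1 - 2 * α) ^ 2 * (HK.T s w * I)) ≤ lam * ((1 + 2 * α) ^ 2 * (2 * π * (v ⬝ᵥ v))) :=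
        mul_le_mul_of_nonneg_left hnear hlam0.le
      have h2 : (1 + 2 * α) ^ 2 * (2 * π) * (lam * (v ⬝ᵥ v)) ≤ (1 + 2 * α) ^ 2 * (2 * π) * HK.T s w :=
        mul_le_mul_of_nonneg_left hR (by positivity)
      linarith
    calc _ ≤ lam / (2 * π) * (Q * I) := by gcongr
      _ = Q * (lam / (2 * π) * I) := by ring
      _ ≤ _ := by gcongr

lemma HK.count (L : ℝ[X] →ₗ[ℝ] ℝ) 
    (hq : ∀ a b : ℝ, 0 < a → a < b → ∃ q : ℝ[X], 0 < L ((X - C a) * (C b - X) * q ^ 2)) (M : ℕ) :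
    ∀ᶠ n in atTop, ∀ (s : Finset ℝ) (w : ℝ → ℝ), (∀ r ∈ s, 0 < w r) → 
      (∀ f : ℝ[X], f.degree < (2 * n : ℕ) → L f = ∑ r ∈ s, w r * f.eval r) → 
      M + 1 ≤ (s.filter (fun x => 1 ≤ x ∧ x ≤ 2)).card := by
  have hM : (0:ℝ) < M + 1 := by positivity
  have hlt : ∀ k : ℕ, 1 + (k:ℝ) / (M + 1) < 1 + ((k:ℝ) + 1) / (M + 1) := by
    intro k; gcongr; linarith
  have h1 : ∀ᶠ n in atTop, ∀ k ∈ Finset.range (M + 1), ∀ (s : Finset ℝ) (w : ℝ → ℝ), (∀ r ∈ s, 0 < w r) → 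
      (∀ f : ℝ[X], f.degree < (2 * n : ℕ) → L f = ∑ r ∈ s, w r * f.eval r) → 
      ∃ r ∈ s, 1 + (k:ℝ) / (M + 1) < r ∧ r < 1 + ((k:ℝ) + 1) / (M + 1) := by
    rw [Filter.eventually_all_finset]
    intro k _
    obtain ⟨q, hq⟩ := hq (1 + (k:ℝ) / (M + 1)) (1 + ((k:ℝ) + 1) / (M + 1)) (by positivity) (hlt k)
    exact HK.root_in L _ _ (hlt k) q hq
  filter_upwards [h1] with n hn s w hw hf
  have h2 : ∀ k : ℕ, ∃ r, k ∈ Finset.range (M + 1) → r ∈ s ∧ 1 + (k:ℝ) / (M + 1) < r ∧ r < 1 + ((k:ℝ) + 1) / (M + 1) := by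
    intro k
    by_cases hk : k ∈ Finset.range (M + 1)
    · obtain ⟨r, hr⟩ := hn k hk s w hw hf
      exact ⟨r, fun _ => hr⟩
    · exact ⟨0, fun h => absurd h hk⟩
  choose R hR using h2
  have h3 : (Finset.range (M + 1)).card ≤ (s.filter (fun x => 1 ≤ x ∧ x ≤ 2)).card := by
    apply Finset.card_le_card_of_injOn R
    · intro k hk
      obtain ⟨h1, h2, h3⟩ := hR k hk
      have hk' : (k:ℝ) + 1 ≤ M + 1 := by
        have := Finset.mem_range.1 hk
        exact_mod_cast this
      have h4 : ((k:ℝ) + 1) / (M + 1) ≤ 1 := by rw [div_le_one hM]; exact hk'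
      have h5 : 0 ≤ (k:ℝ) / (M + 1) := by positivity
      simp only [Finset.coe_filter, Set.mem_ofPred_eq]
      exact ⟨h1, by linarith, by linarith⟩
    · intro k hk k' hk' hkk
      obtain ⟨-, h2, h3⟩ := hR k hk
      obtain ⟨-, h4, h5⟩ := hR k' hk'
      rw [← hkk] at h4 h5
      have e1 : (k:ℝ) / (M + 1) < ((k':ℝ) + 1) / (M + 1) := by linarith
      have e2 : (k':ℝ) / (M + 1) < ((k:ℝ) + 1) / (M + 1) := by linarith
      rw [div_lt_div_iff_of_pos_right hM] at e1 e2
      norm_cast at e1 e2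
      omega
  simpa using h3

/-- For the weight `exp(−x^β)` on `[0,∞)` with `β > 1/2`,
the lower bound `lam N ≥ 2π/∑_{j=0}^N K_jj` for the smallest eigenvalue
`lam N` of the Hankel matrix `H N` is asymptotically sharp:
`(lam N/(2π)) · ∑_{j=0}^N K_jj → 1` as `N → ∞`. -/
theorem smallest_eigenvalue_asymptotically_sharp
    (β : ℝ) (hβ : 1/2 < β)
    (μ : ℕ → ℝ) (hμ : ∀ k, μ k = ∫ x in Set.Ioi (0:ℝ), x ^ k * Real.exp (-(x ^ β)))
    (H : (N : ℕ) → Matrix (Fin (N + 1)) (Fin (N + 1)) ℝ)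
    (hH : ∀ N, ∀ j k : Fin (N + 1), H N j k = μ ((j : ℕ) + (k : ℕ)))
    (hpd : ∀ N, (H N).PosDef)
    (lam : ℕ → ℝ)
    (hlam : ∀ N, IsLeast
      {x : ℝ | Module.End.HasEigenvalue (Matrix.toLin' (H N)) x} (lam N))
    (P : ℕ → Polynomial ℝ)
    (hdeg : ∀ n, (P n).natDegree = n)
    (hlead : ∀ n, 0 < (P n).leadingCoeff)
    (horth : ∀ m n, (∫ x in Set.Ioi (0:ℝ),
      (P m).eval x * (P n).eval x * Real.exp (-(x ^ β))) = if m = n then 1 else 0)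
    (K : ℕ → ℝ)
    (hK : ∀ j, K j = ∫ φ in (0:ℝ)..(2 * π),
      ‖Polynomial.aeval (Complex.exp (φ * Complex.I)) (P j)‖ ^ 2) :
    Tendsto (fun N : ℕ => lam N / (2 * π) * ∑ j ∈ Finset.range (N + 1), K j)
      atTop (nhds 1) := by
  set L := HK.L β hβ with hL
  have hLdef : ∀ p : ℝ[X], L p = ∫ x in Set.Ioi (0:ℝ), p.eval x * exp (-(x ^ β)) := fun p => rfl
  have hpos := HK.L_pos β hβ
  rw [← hL] at hpos
  have horth' : ∀ m n, L (P m * P n) = if m = n then 1 else 0 := by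
    intro m n
    rw [hLdef, ← horth]
    simp only [eval_mul]
  have hP0 : ∀ n, P n ≠ 0 := by
    intro n h
    have := hlead n
    simp [h] at this
  have hquad : ∀ n, ∃ (s : Finset ℝ) (w : ℝ → ℝ), s.card = n ∧ (∀ r ∈ s, 0 < r) ∧ (∀ r ∈ s, 0 < w r) ∧
      ∀ f : ℝ[X], f.degree < (2 * n : ℕ) → L f = ∑ r ∈ s, w r * f.eval r := by
    intro n
    have ho := HK.orth_low L P hdeg horth' n
    obtain ⟨s, h1, h2, h3⟩ := HK.roots_real L hpos (P n) n (hP0 n) (hdeg n) ho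
    obtain ⟨w, h4, h5⟩ := HK.gauss L hpos (P n) n (hP0 n) ho s h1 h3
    exact ⟨s, w, h1, h2, h4, h5⟩
  choose s w hs hs0 hw hq using hquad
  have hG : ∀ N, ∑ j ∈ Finset.range (N + 1), K j = ∫ φ in (0:ℝ)..(2 * π), HK.G (s (N + 1)) (w (N + 1)) φ := by
    intro N
    simp_rw [hK]
    rw [← intervalIntegral.integral_finsetSum]
    · refine intervalIntegral.integral_congr fun φ _ => ?_
      exact HK.kernel L P hdeg horth' (N + 1) _ (hs _) _ (hw _) (hq _) φ
    · intro j _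
      apply Continuous.intervalIntegrable
      have h2 : Continuous fun z : ℂ => aeval z (P j) := by fun_prop
      exact ((h2.comp HK.e_cont).norm).pow 2
  have hlam0 : ∀ N, 0 < lam N := by
    intro N
    obtain ⟨v, hv⟩ := (hlam N).1.exists_hasEigenvector
    have hHv : (H N).mulVec v = lam N • v := by
      have := hv.apply_eq_smul
      rwa [Matrix.toLin'_apply] at this
    have h1 := (hpd N).dotProduct_mulVec_pos hv.2
    rw [hHv, dotProduct_smul, smul_eq_mul] at h1
    have h2 : 0 ≤ star v ⬝ᵥ v := by
      simp only [star_trivial]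
      exact Finset.sum_nonneg fun i _ => mul_self_nonneg _
    by_contra! h
    nlinarith
  have hbd := fun N => HK.bounds L hpos (N + 1) (Nat.succ_pos N) (H N) (fun j k => by
    rw [hH, hμ, hLdef]; simp) (hpd N).isHermitian (lam N) (hlam N) (hlam0 N) (s (N + 1)) (hs _) (hs0 _)
    (w (N + 1)) (hw _) (hq _)
  simp_rw [hG]
  rw [tendsto_order]
  constructor
  · intro a ha
    exact Eventually.of_forall fun N => lt_of_lt_of_le ha (hbd N).1
  · intro c hc
    obtain ⟨α, hα, hα2, hαc⟩ : ∃ α : ℝ, 0 < α ∧ α ≤ 1/4 ∧ (1 + 2 * α) ^ 2 / (1 - 2 * α) ^ 2 < c := by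
      have ht : Tendsto (fun α : ℝ => (1 + 2 * α) ^ 2 / (1 - 2 * α) ^ 2) (𝓝[>] 0) (𝓝 1) := by
        have : ContinuousAt (fun α : ℝ => (1 + 2 * α) ^ 2 / (1 - 2 * α) ^ 2) 0 := by
          apply ContinuousAt.div (by fun_prop) (by fun_prop) (by norm_num)
        have h2 := this.tendsto
        norm_num at h2
        exact h2.mono_left nhdsWithin_le_nhds
      have h1 := ht.eventually (gt_mem_nhds hc)
      have h2 : ∀ᶠ α : ℝ in 𝓝[>] 0, α ≤ 1/4 := 
        nhdsWithin_le_nhds (Iic_mem_nhds (by norm_num))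
      obtain ⟨α, h⟩ := (h1.and (h2.and self_mem_nhdsWithin)).exists
      exact ⟨α, h.2.2, h.2.1, h.1⟩
    have hκ : 0 < cos (α / 2) - cos α := by
      have := Real.cos_lt_cos_of_nonneg_of_le_pi (x := α / 2) (y := α) (by linarith)
        (by linarith [Real.pi_gt_three]) (by linarith)
      linarith
    have hκ2 : cos (α / 2) - cos α ≤ 2 := by linarith [Real.cos_le_one (α / 2), Real.neg_one_le_cos α]
    have htM : Tendsto (fun M : ℕ => (1 + 2 * π / α * (1 - (cos (α / 2) - cos α) / 9) ^ M) * ((1 + 2 * α) ^ 2 / (1 - 2 * α) ^ 2)) atTop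
        (𝓝 ((1 + 2 * π / α * 0) * ((1 + 2 * α) ^ 2 / (1 - 2 * α) ^ 2))) := by
      refine Tendsto.mul_const _ (Tendsto.const_add _ (Tendsto.const_mul _ ?_))
      exact tendsto_pow_atTop_nhds_zero_of_lt_one (by linarith) (by linarith)
    rw [mul_zero, add_zero, one_mul] at htM
    obtain ⟨M, hM⟩ := (htM.eventually (gt_mem_nhds hαc)).exists
    have hcount := (tendsto_add_atTop_nat 1).eventually (HK.count L (HK.exists_q β hβ) M)
    filter_upwards [hcount] with N hN
    exact lt_of_le_of_lt ((hbd N).2 α hα hα2 M (hN _ _ (hw _) (hq _))) hM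
end
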